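/- For every 0 < ε ≤ 1/4 and k ∈ ℕ there exists δ ∈ ℕ with the following property. Let G = (V,E) be a finite k-uniform linear hypergraph with edge correspondence σ and weighted lists of colours (L,μ), and let ℓ, n > δ satisfy: (a) μ(e,c) ∈ [exp(−n^{1/20}), 1] for every edge e and c ∈ L(e); (b) 3ek > ℓ/n > 1+ε; (c) |L(e)|_μ = ℓ for every edge e ∈ E; and (d) |N_{G,L,σ}(e,v,c)|_μ ≤ n for every edge e ∈ E, vertex v ∈ e and colour c ∈ ℕ. Then there is a partial (L,σ)-colouring γ of G with the following properties. Let G' = (V',E') be the subhypergraph of edges not coloured by γ, and for each e ∈ E' let L'(e) be obtained from L(e) by removing every colour c such that some edge f of G incident to e is coloured by γ and (f,γ(f)) blocks (e,c). Then there exist weights μ'(e) : L'(e) → (0,1] and numbers ℓ', n' > 0 such that, for every edge e ∈ E', vertex v ∈ e and colour c ∈ L'(e): (a') n' ≥ (1 − 5k/ln n)·n; (b') ℓ'/n' ≥ (1 + ε/(16 ln n))·(ℓ/n); (c') |L'(e)|_{μ'} = ℓ'; (d') |N_{G',L',σ}(e,v,c)|_{μ'} ≤ n'; and (e') (1 − 2/ℓ)·μ(e,c)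 ≤ μ'(e,c) ≤ μ(e,c). -/

import Mathlib

/-- Two hyperedges are incident if they are distinct and intersect. -/
def HIncident {V : Type} [DecidableEq V] (e f : Finset V) : Prop :=
  e ≠ f ∧ (e ∩ f).Nonempty

instance {V : Type} [DecidableEq V] (e f : Finset V) : Decidable (HIncident e f) :=
  inferInstanceAs (Decidable (e ≠ f ∧ (e ∩ f).Nonempty))

/-- `σ` is an edge correspondence on the edge set `E`: for incident edges,
`σ_{f,e}` is the inverse of `σ_{e,f}`. -/
def IsEdgeCorrespondence {V : Type} [DecidableEq V] (E : Finset (Finset V))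
    (σ : Finset V → Finset V → ℕ ≃ ℕ) : Prop :=
  ∀ e ∈ E, ∀ f ∈ E, HIncident e f → σ f e = (σ e f).symm

/-- The weighted size `|N_{G,L,σ}(e,v,c)|_μ` of the colour neighbourhood of `(e,v,c)`:
the `μ`-weight of all pairs `(f, c')` with `v ∈ f`, `f ≠ e`, `c' ∈ L f` and
`(f, c')` blocking `(e, c)`, i.e. `σ f e c' = c`. -/
def NWeight {V : Type} [DecidableEq V] (E : Finset (Finset V))
    (L : Finset V → Finset ℕ) (μ : Finset V → ℕ → ℝ)
    (σ : Finset V → Finset V → ℕ ≃ ℕ) (e : Finset V) (v : V) (c : ℕ) : ℝ :=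
  ∑ f ∈ E.filter (fun f => v ∈ f ∧ f ≠ e),
    ∑ c' ∈ (L f).filter (fun c' => σ f e c' = c), μ f c'

/-- An `(L,σ)`-colouring of the hypergraph with edge set `E`. -/
def IsLσColouring {V : Type} [DecidableEq V] (E : Finset (Finset V))
    (L : Finset V → Finset ℕ) (σ : Finset V → Finset V → ℕ ≃ ℕ)
    (γ : Finset V → ℕ) : Prop :=
  (∀ e ∈ E, γ e ∈ L e) ∧
  ∀ e ∈ E, ∀ f ∈ E, HIncident e f → σ e f (γ e) ≠ γ f

namespace Nib

section Prob
open Finset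
open scoped Classical

variable {I : Type} [Fintype I]

/-- weight of a configuration of independent coins -/
noncomputable def wt (π : I → ℝ) (ω : I → Bool) : ℝ := ∏ i, (if ω i then π i else 1 - π i)

/-- expectation -/
noncomputable def Ex (π : I → ℝ) (F : (I → Bool) → ℝ) : ℝ := ∑ ω, wt π ω * F ω

/-- probability -/
noncomputable def Pr (π : I → ℝ) (P : (I → Bool) → Prop) : ℝ := Ex π (fun ω => if P ω then 1 else 0)

variable {π : I → ℝ}

lemma wt_nonneg (h0 : ∀ i, 0 ≤ π i) (h1 : ∀ i, π i ≤ 1) (ω : I → Bool) : 0 ≤ wt π ω := by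
  apply Finset.prod_nonneg
  intro i _
  split_ifs
  · exact h0 i
  · linarith [h1 i]

lemma Ex_prod (g : I → Bool → ℝ) :
    Ex π (fun ω => ∏ i, g i (ω i)) = ∏ i, (π i * g i true + (1 - π i) * g i false) := by
  have h := Finset.prod_univ_sum (R := ℝ) (fun _ : I => (Finset.univ : Finset Bool))
    (fun i b => (if b then π i else 1 - π i) * g i b)
  rw [Fintype.piFinset_univ] at h
  simp only [Fintype.sum_bool] at h
  simp only [if_true, Bool.false_eq_true, if_false] at h
  rw [h]
  unfold Ex wt
  apply Finset.sum_congr rfl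
  intro ω _
  rw [← Finset.prod_mul_distrib]

lemma sum_wt : ∑ ω, wt π ω = 1 := by
  have := Ex_prod (π := π) (fun _ _ => 1)
  simpa [Ex] using this

lemma Ex_const (c : ℝ) : Ex π (fun _ => c) = c := by
  unfold Ex; rw [← Finset.sum_mul, sum_wt, one_mul]

lemma Ex_mono (h0 : ∀ i, 0 ≤ π i) (h1 : ∀ i, π i ≤ 1) {F G : (I → Bool) → ℝ}
    (h : ∀ ω, F ω ≤ G ω) : Ex π F ≤ Ex π G :=
  Finset.sum_le_sum fun ω _ => mul_le_mul_of_nonneg_left (h ω) (wt_nonneg h0 h1 ω)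

lemma Ex_add (F G : (I → Bool) → ℝ) : Ex π (fun ω => F ω + G ω) = Ex π F + Ex π G := by
  simp [Ex, mul_add, Finset.sum_add_distrib]

lemma Ex_sum {X : Type} (s : Finset X) (F : X → (I → Bool) → ℝ) :
    Ex π (fun ω => ∑ x ∈ s, F x ω) = ∑ x ∈ s, Ex π (F x) := by
  simp only [Ex, Finset.mul_sum]
  rw [Finset.sum_comm]

lemma Ex_mul_left (c : ℝ) (F : (I → Bool) → ℝ) : Ex π (fun ω => c * F ω) = c * Ex π F := by
  simp only [Ex, Finset.mul_sum]
  exact Finset.sum_congr rfl fun _ _ => by ring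

lemma Ex_mul_right (c : ℝ) (F : (I → Bool) → ℝ) : Ex π (fun ω => F ω * c) = Ex π F * c := by
  simp only [Ex, Finset.sum_mul]
  exact Finset.sum_congr rfl fun _ _ => by ring

lemma Ex_comm (π' : I → ℝ) (F : (I → Bool) → (I → Bool) → ℝ) :
    Ex π (fun ω => Ex π' (fun α => F ω α)) = Ex π' (fun α => Ex π (fun ω => F ω α)) := by
  simp only [Ex, Finset.mul_sum]
  rw [Finset.sum_comm]
  exact Finset.sum_congr rfl fun _ _ => Finset.sum_congr rfl fun _ _ => by ring

/-- mix two configurations -/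
noncomputable def mix (A : Set I) (ω ω' : I → Bool) : I → Bool := fun i => if i ∈ A then ω i else ω' i

lemma mix_mix (A : Set I) (ω ω' : I → Bool) : mix A (mix A ω ω') (mix A ω' ω) = ω := by
  funext i; simp only [mix]; split_ifs <;> rfl

lemma wt_mix (A : Set I) (ω ω' : I → Bool) :
    wt π (mix A ω ω') * wt π (mix A ω' ω) = wt π ω * wt π ω' := by
  unfold wt
  rw [← Finset.prod_mul_distrib, ← Finset.prod_mul_distrib]
  apply Finset.prod_congr rfl
  intro i _
  simp only [mix]
  by_cases h : i ∈ A
  · simp only [h, if_true]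
  · simp only [h, if_false]; ring

lemma Ex_mix (A : Set I) (F : (I → Bool) → ℝ) :
    Ex π F = Ex π (fun ω' => Ex π (fun ω => F (mix A ω ω'))) := by
  let Φ : ((I → Bool) × (I → Bool)) ≃ ((I → Bool) × (I → Bool)) :=
    { toFun := fun x => (mix A x.1 x.2, mix A x.2 x.1)
      invFun := fun x => (mix A x.1 x.2, mix A x.2 x.1)
      left_inv := fun x => by simp [mix_mix]
      right_inv := fun x => by simp [mix_mix] }
  have h1 : ∑ x : (I → Bool) × (I → Bool), wt π x.1 * wt π x.2 * F x.1
      = ∑ x : (I → Bool) × (I → Bool), wt π x.1 * wt π x.2 * F (mix A x.1 x.2) := by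
    rw [← Equiv.sum_comp Φ]
    apply Finset.sum_congr rfl
    intro x _
    show wt π (mix A x.1 x.2) * wt π (mix A x.2 x.1) * F (mix A x.1 x.2) = _
    rw [wt_mix]
  rw [Fintype.sum_prod_type, Fintype.sum_prod_type_right] at h1
  have h2 : Ex π F = ∑ x : I → Bool, ∑ y : I → Bool, wt π x * wt π y * F x := by
    unfold Ex
    apply Finset.sum_congr rfl
    intro x _
    rw [← Finset.sum_mul, ← Finset.mul_sum, sum_wt, mul_one]
  rw [h2, h1]
  simp only [Ex, Finset.mul_sum]
  exact Finset.sum_congr rfl fun _ _ => Finset.sum_congr rfl fun _ _ => by ring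

lemma Ex_indep (A : Set I) (F G : (I → Bool) → ℝ)
    (hF : ∀ ω ω', (∀ i ∈ A, ω i = ω' i) → F ω = F ω')
    (hG : ∀ ω ω', (∀ i ∉ A, ω i = ω' i) → G ω = G ω') :
    Ex π (fun ω => F ω * G ω) = Ex π F * Ex π G := by
  rw [Ex_mix A]
  have : ∀ ω ω', F (mix A ω ω') * G (mix A ω ω') = F ω * G ω' := by
    intro ω ω'
    rw [hF (mix A ω ω') ω (fun i hi => by simp [mix, hi]),
      hG (mix A ω ω') ω' (fun i hi => by simp [mix, hi])]
  simp only [this]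
  simp only [Ex_mul_right, Ex_mul_left]

lemma Pr_mono (h0 : ∀ i, 0 ≤ π i) (h1 : ∀ i, π i ≤ 1) {P Q : (I → Bool) → Prop}
    (h : ∀ ω, P ω → Q ω) : Pr π P ≤ Pr π Q := by
  apply Ex_mono h0 h1
  intro ω
  by_cases hp : P ω
  · simp [hp, h ω hp]
  · simp only [hp, if_false]; split_ifs <;> norm_num

lemma Pr_nonneg (h0 : ∀ i, 0 ≤ π i) (h1 : ∀ i, π i ≤ 1) (P : (I → Bool) → Prop) : 0 ≤ Pr π P := by
  have := Pr_mono h0 h1 (P := fun _ => False) (Q := P) (by simp)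
  simpa [Pr, Ex_const] using this

lemma Pr_or (h0 : ∀ i, 0 ≤ π i) (h1 : ∀ i, π i ≤ 1) (P Q : (I → Bool) → Prop) :
    Pr π (fun ω => P ω ∨ Q ω) ≤ Pr π P + Pr π Q := by
  unfold Pr
  rw [← Ex_add]
  apply Ex_mono h0 h1
  intro ω
  by_cases hp : P ω <;> by_cases hq : Q ω <;> simp [hp, hq]

lemma Pr_exists (h0 : ∀ i, 0 ≤ π i) (h1 : ∀ i, π i ≤ 1) {X : Type} (s : Finset X)
    (P : X → (I → Bool) → Prop) :
    Pr π (fun ω => ∃ x ∈ s, P x ω) ≤ ∑ x ∈ s, Pr π (P x) := by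
  unfold Pr
  rw [← Ex_sum]
  apply Ex_mono h0 h1
  intro ω
  split_ifs with h
  · obtain ⟨x, hx, hP⟩ := h
    have := Finset.single_le_sum (f := fun x => if P x ω then (1:ℝ) else 0)
      (fun y _ => by positivity) hx
    simpa [hP] using this
  · exact Finset.sum_nonneg fun _ _ => by positivity

lemma exists_of_Pr_pos {P : (I → Bool) → Prop} (h : 0 < Pr π P) : ∃ ω, P ω := by
  by_contra hc
  push Not at hc
  simp [Pr, hc, Ex_const] at h

/-- Lovász local lemma, symmetric version on a product space -/
lemma LLL {H : Type} (h0 : ∀ i, 0 ≤ π i) (h1 : ∀ i, π i ≤ 1) (E : Finset H)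
    (Bad : H → (I → Bool) → Prop) (T : H → Set I)
    (hdep : ∀ e ∈ E, ∀ ω ω', (∀ l ∈ T e, ω l = ω' l) → Bad e ω → Bad e ω')
    (Γ : H → Finset H) (hΓ : ∀ e ∈ E, ∀ e' ∈ E, e' ∉ Γ e → Disjoint (T e) (T e'))
    (q d : ℝ) (hq0 : 0 ≤ q) (hd1 : 1 ≤ d) (hd : ∀ e ∈ E, ((Γ e).card : ℝ) ≤ d)
    (hq : ∀ e ∈ E, Pr π (Bad e) ≤ q) (hqd : 4 * q * d ≤ 1) :
    0 < Pr π (fun ω => ∀ e ∈ E, ¬ Bad e ω) := by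
  set f : Finset H → ℝ := fun S => Pr π (fun ω => ∀ e ∈ S, ¬ Bad e ω) with hf
  have fnn : ∀ S, 0 ≤ f S := fun S => Pr_nonneg h0 h1 _
  have hq4 : 4 * q ≤ 1 := by nlinarith
  have hx0 : 0 ≤ 1 - 2 * q := by linarith
  have hx1 : 0 < 1 - 2 * q := by linarith
  have hx2 : 1 - 2 * q ≤ 1 := by linarith
  have hmain : ∀ N : ℕ, ∀ S : Finset H, S.card ≤ N → S ⊆ E → ∀ e ∈ E, e ∉ S →
      (1 - 2 * q) * f S ≤ f (insert e S) := by
    intro N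
    induction N using Nat.strong_induction_on with
    | _ N ih =>
    intro S hSN hSE e he heS
    have hsplit : f S ≤ f (insert e S) + Pr π (fun ω => Bad e ω ∧ ∀ e' ∈ S \ Γ e, ¬ Bad e' ω) := by
      simp only [hf, Pr]
      rw [← Ex_add]
      apply Ex_mono h0 h1
      intro ω
      by_cases hb : Bad e ω
      · by_cases hs : ∀ e' ∈ S, ¬ Bad e' ω
        · have : ∀ e' ∈ S \ Γ e, ¬ Bad e' ω := fun e' he' => hs e' (Finset.mem_sdiff.1 he').1
          rw [if_pos hs, if_pos (⟨hb, this⟩ : Bad e ω ∧ ∀ e' ∈ S \ Γ e, ¬ Bad e' ω)]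
          split_ifs <;> norm_num
        · rw [if_neg hs]; positivity
      · by_cases hs : ∀ e' ∈ S, ¬ Bad e' ω
        · have : ∀ e' ∈ insert e S, ¬ Bad e' ω := by
            intro e' he'
            rcases Finset.mem_insert.1 he' with rfl | h
            · exact hb
            · exact hs e' h
          rw [if_pos hs, if_pos this]
          split_ifs <;> norm_num
        · rw [if_neg hs]; positivity
    have hind : Pr π (fun ω => Bad e ω ∧ ∀ e' ∈ S \ Γ e, ¬ Bad e' ω)
        = Pr π (Bad e) * f (S \ Γ e) := by
      simp only [hf, Pr]
      rw [← Ex_indep (T e)]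
      · congr 1
        funext ω
        by_cases hb : Bad e ω <;> simp [hb]
      · intro ω ω' h
        have : Bad e ω ↔ Bad e ω' :=
          ⟨hdep e he ω ω' h, hdep e he ω' ω (fun l hl => (h l hl).symm)⟩
        simp [this]
      · intro ω ω' h
        have : (∀ e' ∈ S \ Γ e, ¬ Bad e' ω) ↔ (∀ e' ∈ S \ Γ e, ¬ Bad e' ω') := by
          have key : ∀ e' ∈ S \ Γ e, (Bad e' ω ↔ Bad e' ω') := by
            intro e' he'
            have hm := Finset.mem_sdiff.1 he'
            have hdj := hΓ e he e' (hSE hm.1) hm.2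
            have hn : ∀ l ∈ T e', l ∉ T e := fun l hl hl' => (Set.disjoint_left.1 hdj) hl' hl
            exact ⟨hdep e' (hSE hm.1) ω ω' (fun l hl => h l (hn l hl)),
              hdep e' (hSE hm.1) ω' ω (fun l hl => (h l (hn l hl)).symm)⟩
          exact ⟨fun hh e' he' hb => hh e' he' ((key e' he').2 hb),
            fun hh e' he' hb => hh e' he' ((key e' he').1 hb)⟩
        by_cases hh : ∀ e' ∈ S \ Γ e, ¬ Bad e' ω
        · rw [if_pos hh, if_pos (this.1 hh)]
        · rw [if_neg hh, if_neg (fun h => hh (this.2 h))]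
    -- chain
    have hchain : ∀ R : Finset H, R ⊆ S ∩ Γ e → (1 - 2 * q) ^ R.card * f (S \ Γ e) ≤ f ((S \ Γ e) ∪ R) := by
      intro R
      induction R using Finset.induction_on with
      | empty => intro _; simp
      | insert r R hr ihR =>
        intro hsub
        have hrS : r ∈ S ∩ Γ e := hsub (Finset.mem_insert_self _ _)
        have hRsub : R ⊆ S ∩ Γ e := fun x hx => hsub (Finset.mem_insert_of_mem hx)
        have hnot : r ∉ (S \ Γ e) ∪ R := by
          intro h
          rcases Finset.mem_union.1 h with h | h
          · exact (Finset.mem_sdiff.1 h).2 (Finset.mem_inter.1 hrS).2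
          · exact hr h
        have hsubS : (S \ Γ e) ∪ R ⊆ S := by
          intro x hx
          rcases Finset.mem_union.1 hx with h | h
          · exact (Finset.mem_sdiff.1 h).1
          · exact (Finset.mem_inter.1 (hRsub h)).1
        have hlt : ((S \ Γ e) ∪ R).card < S.card := by
          apply Finset.card_lt_card
          refine ⟨hsubS, fun h => hnot (h (Finset.mem_inter.1 hrS).1)⟩
        have h3 := ih ((S \ Γ e) ∪ R).card (lt_of_lt_of_le hlt hSN) ((S \ Γ e) ∪ R) le_rfl
          (hsubS.trans hSE) r (hSE (Finset.mem_inter.1 hrS).1) hnot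
        rw [Finset.card_insert_of_notMem hr, pow_succ', Finset.union_insert]
        calc _ = (1 - 2 * q) * ((1 - 2 * q) ^ R.card * f (S \ Γ e)) := by ring
          _ ≤ (1 - 2 * q) * f ((S \ Γ e) ∪ R) := mul_le_mul_of_nonneg_left (ihR hRsub) hx0
          _ ≤ _ := h3
    have hc := hchain (S ∩ Γ e) (Finset.Subset.refl _)
    have hun : (S \ Γ e) ∪ (S ∩ Γ e) = S := by
      ext x; simp only [Finset.mem_union, Finset.mem_sdiff, Finset.mem_inter]; tauto
    rw [hun] at hc
    have hber : (1:ℝ) / 2 ≤ (1 - 2 * q) ^ (S ∩ Γ e).card := by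
      have hb := one_add_mul_le_pow (a := - (2 * q)) (by linarith) (S ∩ Γ e).card
      have hcard : (((S ∩ Γ e).card : ℕ) : ℝ) ≤ d :=
        le_trans (by exact_mod_cast Finset.card_le_card Finset.inter_subset_right) (hd e he)
      have : (1 + -(2*q)) = 1 - 2 * q := by ring
      rw [this] at hb
      nlinarith
    have h5 : f (S \ Γ e) ≤ 2 * f S := by
      nlinarith [fnn (S \ Γ e)]
    have h6 : Pr π (Bad e) * f (S \ Γ e) ≤ q * (2 * f S) :=
      mul_le_mul (hq e he) h5 (fnn _) hq0
    rw [hind] at hsplit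
    linarith
  have hpos : ∀ S : Finset H, S ⊆ E → 0 < f S := by
    intro S
    induction S using Finset.induction_on with
    | empty => intro _; simp [hf, Pr, Ex_const]
    | insert e S he ih =>
      intro hsub
      have hS : S ⊆ E := fun x hx => hsub (Finset.mem_insert_of_mem hx)
      exact lt_of_lt_of_le (mul_pos hx1 (ih hS))
        (hmain S.card S le_rfl hS e (hsub (Finset.mem_insert_self _ _)) he)
  exact hpos E (Finset.Subset.refl _)

lemma Ex_exp_lin (h0 : ∀ i, 0 ≤ π i) (h1 : ∀ i, π i ≤ 1) (c : I → ℝ) :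
    Ex π (fun ω => Real.exp (∑ i, if ω i then c i else 0)) ≤ Real.exp (∑ i, π i * (Real.exp (c i) - 1)) := by
  have h : ∀ ω : I → Bool, Real.exp (∑ i, if ω i then c i else 0)
      = ∏ i, (fun (i : I) (b : Bool) => Real.exp (if b then c i else 0)) i (ω i) := by
    intro ω; rw [Real.exp_sum]
  simp only [h]
  rw [Ex_prod (π := π) (fun (i : I) (b : Bool) => Real.exp (if b then c i else 0)), Real.exp_sum]
  apply Finset.prod_le_prod
  · intro i _
    simp only [if_true, Bool.false_eq_true, if_false, Real.exp_zero]
    have := mul_nonneg (h0 i) (Real.exp_pos (c i)).le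
    linarith [h1 i]
  · intro i _
    simp only [if_true, Bool.false_eq_true, if_false, Real.exp_zero]
    have := Real.add_one_le_exp (π i * (Real.exp (c i) - 1))
    linarith

lemma Markov_exp (h0 : ∀ i, 0 ≤ π i) (h1 : ∀ i, π i ≤ 1) (X : (I → Bool) → ℝ) (x B : ℝ)
    (h : Ex π (fun ω => Real.exp (X ω)) ≤ Real.exp B) :
    Pr π (fun ω => x ≤ X ω) ≤ Real.exp (B - x) := by
  have h2 : Pr π (fun ω => x ≤ X ω) ≤ Ex π (fun ω => Real.exp (-x) * Real.exp (X ω)) := by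
    apply Ex_mono h0 h1
    intro ω
    rw [← Real.exp_add]
    split_ifs with hx
    · exact Real.one_le_exp (by linarith)
    · exact (Real.exp_pos _).le
  rw [Ex_mul_left] at h2
  calc _ ≤ _ := h2
    _ ≤ Real.exp (-x) * Real.exp B := mul_le_mul_of_nonneg_left h (Real.exp_pos _).le
    _ = _ := by rw [← Real.exp_add]; ring_nf

lemma exp_le_quad {x : ℝ} (h : |x| ≤ 1) : Real.exp x - 1 ≤ x + x ^ 2 := by
  have := Real.abs_exp_sub_one_sub_id_le h
  linarith [(abs_le.1 this).2]

lemma exp_le_lin {x : ℝ} (h0 : 0 ≤ x) (h : x ≤ 1) : Real.exp x - 1 ≤ 2 * x := by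
  have := exp_le_quad (x := x) (by rw [abs_of_nonneg h0]; exact h)
  nlinarith

/-- Chernoff bound for linear forms -/
lemma chernoff (h0 : ∀ i, 0 ≤ π i) (h1 : ∀ i, π i ≤ 1) (c : I → ℝ) (cs b lam : ℝ)
    (hcs : 0 < cs) (hc : ∀ i, |c i| ≤ cs) (hb : ∑ i, π i * |c i| ≤ b) (hb0 : 0 < b)
    (hl0 : 0 ≤ lam) (hlb : lam ≤ 2 * b) :
    Pr π (fun ω => ∑ i, π i * c i + lam ≤ ∑ i, if ω i then c i else 0)
      ≤ Real.exp (-(lam ^ 2 / (4 * b * cs))) := by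
  set t : ℝ := lam / (2 * b * cs) with ht
  have ht0 : 0 ≤ t := by positivity
  have htcs : t * cs ≤ 1 := by
    rw [ht]; field_simp; linarith
  have hmgf := Ex_exp_lin h0 h1 (fun i => t * c i)
  have habs : ∀ i, |t * c i| ≤ 1 := by
    intro i
    rw [abs_mul, abs_of_nonneg ht0]
    exact le_trans (mul_le_mul_of_nonneg_left (hc i) ht0) htcs
  have hsum : ∑ i, π i * (Real.exp (t * c i) - 1) ≤ t * ∑ i, π i * c i + t ^ 2 * cs * b := by
    calc ∑ i, π i * (Real.exp (t * c i) - 1)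
        ≤ ∑ i, (t * (π i * c i) + t ^ 2 * cs * (π i * |c i|)) := by
          apply Finset.sum_le_sum
          intro i _
          have h2 := exp_le_quad (habs i)
          have h3 : (c i) ^ 2 ≤ cs * |c i| := by
            rw [← sq_abs, pow_two]
            exact mul_le_mul_of_nonneg_right (hc i) (abs_nonneg _)
          have h4 : (t * c i) ^ 2 ≤ t ^ 2 * (cs * |c i|) := by
            rw [mul_pow]; exact mul_le_mul_of_nonneg_left h3 (by positivity)
          calc π i * (Real.exp (t * c i) - 1) ≤ π i * (t * c i + t ^ 2 * (cs * |c i|)) :=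
                mul_le_mul_of_nonneg_left (by linarith) (h0 i)
            _ = _ := by ring
      _ = t * ∑ i, π i * c i + t ^ 2 * cs * ∑ i, π i * |c i| := by
          rw [Finset.sum_add_distrib, ← Finset.mul_sum, ← Finset.mul_sum]
      _ ≤ _ := by
          have : t ^ 2 * cs * ∑ i, π i * |c i| ≤ t ^ 2 * cs * b :=
            mul_le_mul_of_nonneg_left hb (by positivity)
          linarith
  have hM := Markov_exp h0 h1 (fun ω => ∑ i, if ω i then t * c i else 0)
    (t * (∑ i, π i * c i + lam)) _ (hmgf.trans (Real.exp_le_exp.2 hsum))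
  rcases hl0.eq_or_lt with hl | hl
  · rw [← hl]
    simp only [ne_eq, OfNat.ofNat_ne_zero, not_false_eq_true, zero_pow, zero_div, neg_zero, Real.exp_zero]
    have := Pr_mono h0 h1 (P := fun ω => ∑ i, π i * c i + 0 ≤ ∑ i, if ω i then c i else 0)
      (Q := fun _ => True) (by simp)
    simpa [Pr, Ex_const] using this
  have htp : 0 < t := by positivity
  refine le_trans (Pr_mono h0 h1 ?_) (hM.trans (Real.exp_le_exp.2 ?_))
  · intro ω hω
    have : ∑ i, (if ω i then t * c i else 0) = t * ∑ i, (if ω i then c i else 0) := by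
      rw [Finset.mul_sum]
      exact Finset.sum_congr rfl fun i _ => by split_ifs <;> simp
    rw [this]
    exact mul_le_mul_of_nonneg_left hω ht0
  · rw [ht]
    apply le_of_eq
    field_simp
    ring

lemma Ex_half {i j : I} (hij : i ≠ j) :
    Ex (fun _ : I => (1/2 : ℝ)) (fun α => if (α i = true ∧ α j = false) then 1 else 0) = 1 / 4 := by
  have h := Ex_prod (π := fun _ : I => (1/2 : ℝ))
    (fun l b => if l = i then (if b then 1 else 0) else if l = j then (if b then 0 else 1) else 1)
  have h2 : ∀ α : I → Bool, (∏ l, (if l = i then (if α l then (1:ℝ) else 0) else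
      if l = j then (if α l then 0 else 1) else 1)) = if (α i = true ∧ α j = false) then 1 else 0 := by
    intro α
    rw [Finset.prod_eq_mul i j hij]
    · rw [if_pos rfl, if_neg hij.symm, if_pos rfl]
      cases α i <;> cases α j <;> simp
    · intro l _ hl
      rw [if_neg hl.1, if_neg hl.2]
    · intro h; exact absurd (Finset.mem_univ _) h
    · intro h; exact absurd (Finset.mem_univ _) h
  simp only [h2] at h
  rw [h, Finset.prod_eq_mul i j hij]
  · simp [hij.symm]; norm_num
  · intro l _ hl
    rw [if_neg hl.1, if_neg hl.2, if_neg hl.1, if_neg hl.2]; norm_num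
  · intro h; exact absurd (Finset.mem_univ _) h
  · intro h; exact absurd (Finset.mem_univ _) h

lemma jensen_exp (h0 : ∀ i, 0 ≤ π i) (h1 : ∀ i, π i ≤ 1) (F : (I → Bool) → ℝ) :
    Real.exp (Ex π F) ≤ Ex π (fun ω => Real.exp (F ω)) := by
  have := convexOn_exp.map_sum_le (t := (Finset.univ : Finset (I → Bool))) (w := wt π) (p := F)
    (fun ω _ => wt_nonneg h0 h1 ω) sum_wt (fun _ _ => Set.mem_univ _)
  simpa [Ex, smul_eq_mul] using this

/-- upper tail for quadratic conflict forms -/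
lemma quad_tail (h0 : ∀ i, 0 ≤ π i) (h1 : ∀ i, π i ≤ 1) {X : Type} [Fintype X] (w : X → ℝ)
    (hw : ∀ x, 0 ≤ w x) (g : X → I) (N : X → I → Prop) (hN : ∀ x l, N x l → g x ≠ l)
    (t M lam : ℝ) (ht : 0 ≤ t)
    (hW : ∀ l, 4 * t * ∑ x, (if g x = l then w x else 0) ≤ 1)
    (hC : ∀ l, 8 * t * ∑ x, (if N x l then w x * π (g x) else 0) ≤ 1)
    (hM : ∑ l, π l * ∑ x, (if N x l then w x * π (g x) else 0) ≤ M) :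
    Pr π (fun ω => 16 * M + lam ≤ ∑ x, if (ω (g x) = true ∧ ∃ l, N x l ∧ ω l = true) then w x else 0)
      ≤ Real.exp (-(t * lam)) := by
  set hf : I → ℝ := fun _ => 1/2
  have hf0 : ∀ i, 0 ≤ hf i := fun _ => by norm_num [hf]
  have hf1 : ∀ i, hf i ≤ 1 := fun _ => by norm_num [hf]
  set PA : (I → Bool) → (I → Bool) → ℝ := fun ω α =>
    ∑ x, if (ω (g x) = true ∧ α (g x) = true ∧ ∃ l, N x l ∧ ω l = true ∧ α l = false) then w x else 0 with hPA
  set P : (I → Bool) → ℝ := fun ω =>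
    ∑ x, if (ω (g x) = true ∧ ∃ l, N x l ∧ ω l = true) then w x else 0 with hP
  have hdec : ∀ ω, P ω ≤ 4 * Ex hf (fun α => PA ω α) := by
    intro ω
    simp only [hPA, hP]
    rw [Ex_sum, Finset.mul_sum]
    apply Finset.sum_le_sum
    intro x _
    split_ifs with hx
    · obtain ⟨hx1, l, hl, hωl⟩ := hx
      have h := Ex_half (hN x l hl)
      have h2 : Ex hf (fun α => w x * if (α (g x) = true ∧ α l = false) then 1 else 0) ≤
          Ex hf (fun α => if (ω (g x) = true ∧ α (g x) = true ∧ ∃ l, N x l ∧ ω l = true ∧ α l = false) then w x else 0) := by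
        apply Ex_mono hf0 hf1
        intro α
        by_cases hα : α (g x) = true ∧ α l = false
        · rw [if_pos hα, if_pos ⟨hx1, hα.1, l, hl, hωl, hα.2⟩, mul_one]
        · rw [if_neg hα, mul_zero]; split_ifs
          · exact hw x
          · exact le_rfl
      rw [Ex_mul_left, h] at h2
      linarith
    · have : Ex hf (fun _ => 0) ≤ Ex hf (fun α => if (ω (g x) = true ∧ α (g x) = true ∧ ∃ l, N x l ∧ ω l = true ∧ α l = false) then w x else 0) := by
        apply Ex_mono hf0 hf1
        intro α
        split_ifs
        · exact hw x
        · exact le_rfl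
      rw [Ex_const] at this
      linarith
  have hfix : ∀ α, Ex π (fun ω => Real.exp (4 * t * PA ω α)) ≤ Real.exp (16 * t * M) := by
    intro α
    rw [Ex_mix {i | α i = true}]
    set D : (I → Bool) → X → Prop := fun ω' x => ∃ l, N x l ∧ ω' l = true ∧ α l = false with hD
    set c : (I → Bool) → I → ℝ := fun ω' l => 4 * t * ∑ x, if (g x = l ∧ α l = true ∧ D ω' x) then w x else 0 with hc
    have hmx : ∀ ω ω', 4 * t * PA (mix {i | α i = true} ω ω') α = ∑ l, if ω l then c ω' l else 0 := by
      intro ω ω'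
      simp only [hPA, hc, mix, Set.mem_ofPred_eq]
      have : ∀ l, (if ω l = true then 4 * t * ∑ x, (if (g x = l ∧ α l = true ∧ D ω' x) then w x else 0) else 0)
          = 4 * t * ∑ x, (if ω l = true then (if (g x = l ∧ α l = true ∧ D ω' x) then w x else 0) else 0) := by
        intro l; split_ifs <;> simp
      simp only [this]
      rw [← Finset.mul_sum, Finset.sum_comm]
      congr 1
      apply Finset.sum_congr rfl
      intro x _
      rw [Finset.sum_eq_single (g x)]
      · by_cases hα : α (g x) = true
        · by_cases hω : ω (g x) = true
          · simp only [hα, hω, if_true, true_and, hD]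
            apply if_congr _ rfl rfl
            constructor
            · rintro ⟨l, h1, h2, h3⟩
              exact ⟨l, h1, by simpa [h3] using h2, h3⟩
            · rintro ⟨l, h1, h2, h3⟩
              exact ⟨l, h1, by simpa [h3] using h2, h3⟩
          · simp [hα, hω]
        · simp [hα]
      · intro l _ hl
        simp [hl.symm]
      · intro h; exact absurd (Finset.mem_univ _) h
    simp only [hmx]
    set C : I → ℝ := fun l => 8 * t * ∑ x, (if N x l then w x * π (g x) else 0) with hCdef
    have hC0 : ∀ l, 0 ≤ C l := fun l => by
      apply mul_nonneg (by positivity)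
      apply Finset.sum_nonneg; intro x _; split_ifs
      · exact mul_nonneg (hw x) (h0 _)
      · exact le_rfl
    have hc0 : ∀ ω' l, 0 ≤ c ω' l := fun ω' l => by
      apply mul_nonneg (by positivity)
      apply Finset.sum_nonneg; intro x _; split_ifs
      · exact hw x
      · exact le_rfl
    have hc1 : ∀ ω' l, c ω' l ≤ 1 := fun ω' l => by
      refine le_trans (mul_le_mul_of_nonneg_left (Finset.sum_le_sum ?_) (by positivity)) (hW l)
      intro x _
      by_cases h : g x = l
      · simp only [h, if_true, true_and]; split_ifs
        · exact le_rfl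
        · exact hw x
      · simp [h]
    have hin : ∀ ω', Ex π (fun ω => Real.exp (∑ l, if ω l then c ω' l else 0))
        ≤ Real.exp (∑ l, if ω' l then C l else 0) := by
      intro ω'
      refine (Ex_exp_lin h0 h1 (c ω')).trans (Real.exp_le_exp.2 ?_)
      calc ∑ l, π l * (Real.exp (c ω' l) - 1) ≤ ∑ l, π l * (2 * c ω' l) :=
            Finset.sum_le_sum fun l _ => mul_le_mul_of_nonneg_left (exp_le_lin (hc0 ω' l) (hc1 ω' l)) (h0 l)
        _ = ∑ l, ∑ x, (8 * t) * (if (g x = l ∧ α l = true ∧ D ω' x) then w x * π (g x) else 0) := by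
            apply Finset.sum_congr rfl
            intro l _
            simp only [hc]
            rw [Finset.mul_sum, Finset.mul_sum, Finset.mul_sum]
            apply Finset.sum_congr rfl
            intro x _
            split_ifs with h
            · rw [h.1]; ring
            · ring
        _ ≤ ∑ x, (8 * t) * (if D ω' x then w x * π (g x) else 0) := by
            rw [Finset.sum_comm]
            apply Finset.sum_le_sum
            intro x _
            rw [← Finset.mul_sum]
            apply mul_le_mul_of_nonneg_left _ (by positivity)
            rw [Finset.sum_eq_single (g x)]
            · have := mul_nonneg (hw x) (h0 (g x))
              by_cases hd : D ω' x
              · simp only [hd, true_and, and_true, if_true]; split_ifs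
                · exact le_rfl
                · exact this
              · simp [hd]
            · intro l _ hl; simp [hl.symm]
            · intro h; exact absurd (Finset.mem_univ _) h
        _ ≤ ∑ x, (8 * t) * ∑ l, (if ω' l then (if N x l then w x * π (g x) else 0) else 0) := by
            apply Finset.sum_le_sum
            intro x _
            apply mul_le_mul_of_nonneg_left _ (by positivity)
            have hnn := mul_nonneg (hw x) (h0 (g x))
            have hnn2 : ∀ l ∈ Finset.univ, 0 ≤ (if ω' l then (if N x l then w x * π (g x) else 0) else 0) := by
              intro l _; split_ifs
              · exact hnn
              · exact le_rfl
              · exact le_rfl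
            split_ifs with hd
            · obtain ⟨l, hl1, hl2, hl3⟩ := hd
              have := Finset.single_le_sum hnn2 (Finset.mem_univ l)
              simpa [hl1, hl2] using this
            · exact Finset.sum_nonneg hnn2
        _ = ∑ l, if ω' l then C l else 0 := by
            simp only [Finset.mul_sum, hCdef]
            rw [Finset.sum_comm]
            apply Finset.sum_congr rfl
            intro l _
            split_ifs
            · rfl
            · simp
    refine (Ex_mono h0 h1 hin).trans ((Ex_exp_lin h0 h1 C).trans (Real.exp_le_exp.2 ?_))
    calc ∑ l, π l * (Real.exp (C l) - 1) ≤ ∑ l, π l * (2 * C l) :=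
          Finset.sum_le_sum fun l _ => mul_le_mul_of_nonneg_left (exp_le_lin (hC0 l) (hC l)) (h0 l)
      _ = 16 * t * ∑ l, π l * ∑ x, (if N x l then w x * π (g x) else 0) := by
          rw [Finset.mul_sum]
          exact Finset.sum_congr rfl fun l _ => by simp only [hCdef]; ring
      _ ≤ _ := mul_le_mul_of_nonneg_left hM (by positivity)
  have hmgf : Ex π (fun ω => Real.exp (t * P ω)) ≤ Real.exp (16 * t * M) := by
    calc Ex π (fun ω => Real.exp (t * P ω))
        ≤ Ex π (fun ω => Ex hf (fun α => Real.exp (4 * t * PA ω α))) := by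
          apply Ex_mono h0 h1
          intro ω
          refine le_trans (Real.exp_le_exp.2 ?_) (jensen_exp hf0 hf1 _)
          rw [Ex_mul_left]
          have := mul_le_mul_of_nonneg_left (hdec ω) ht
          linarith
      _ = Ex hf (fun α => Ex π (fun ω => Real.exp (4 * t * PA ω α))) := Ex_comm hf _
      _ ≤ Ex hf (fun _ => Real.exp (16 * t * M)) := Ex_mono hf0 hf1 hfix
      _ = _ := Ex_const _
  have hMk := Markov_exp h0 h1 (fun ω => t * P ω) (t * (16 * M + lam)) _ hmgf
  refine le_trans (Pr_mono h0 h1 ?_) (hMk.trans (Real.exp_le_exp.2 ?_))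
  · intro ω hω
    exact mul_le_mul_of_nonneg_left hω ht
  · apply le_of_eq; ring

end Prob
end Nib

namespace Nib

section State
open Finset
open scoped Classical

/-- State of the nibble: items `I` (edge/colour pairs), the edge of an item, the conflict relation. -/
structure St {V I : Type} [Fintype I] (k : ℕ) (ed : I → Finset V) (R : I → I → Prop)
    (E : Finset (Finset V)) (p : I → ℝ) (a m τ : ℝ) : Prop where
  symm : ∀ i j, R i j → R j i
  ne : ∀ i j, R i j → ed i ≠ ed j
  meet : ∀ i j, R i j → (ed i ∩ ed j).Nonempty
  uniq : ∀ i j j', R i j → R i j' → ed j = ed j' → j = j'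
  lin : ∀ i j, ed i ≠ ed j → (ed i ∩ ed j).card ≤ 1
  card : ∀ i, (ed i).card ≤ k
  memE : ∀ i, ed i ∈ E
  τpos : 0 < τ
  lo : ∀ i, τ ≤ p i
  hi : ∀ i, p i ≤ m
  sum : ∀ e ∈ E, ∑ i, (if ed i = e then p i else 0) = 1
  kap : ∀ i, ∀ v ∈ ed i, ∑ j, (if R i j ∧ v ∈ ed j then p j else 0) ≤ a

variable {V I : Type} [Fintype I] {k : ℕ} {ed : I → Finset V} {R : I → I → Prop}
    {E : Finset (Finset V)} {p : I → ℝ} {a m τ : ℝ}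

lemma St.pos (h : St k ed R E p a m τ) (i : I) : 0 < p i := lt_of_lt_of_le h.τpos (h.lo i)

lemma St.a_nonneg (h : St k ed R E p a m τ) (i : I) (v : V) (hv : v ∈ ed i) : 0 ≤ a := by
  refine le_trans (Finset.sum_nonneg ?_) (h.kap i v hv)
  intro j _; split_ifs
  · exact (h.pos j).le
  · exact le_rfl

/-- total conflict weight -/
lemma St.K_le (h : St k ed R E p a m τ) (ha : 0 ≤ a) (i : I) :
    ∑ j, (if R i j then p j else 0) ≤ k * a := by
  calc ∑ j, (if R i j then p j else 0)
      ≤ ∑ j, ∑ v ∈ ed i, (if R i j ∧ v ∈ ed j then p j else 0) := by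
        apply Finset.sum_le_sum
        intro j _
        have hnn : ∀ v ∈ ed i, 0 ≤ (if R i j ∧ v ∈ ed j then p j else 0) := by
          intro v _; split_ifs
          · exact (h.pos j).le
          · exact le_rfl
        split_ifs with hR
        · obtain ⟨v, hv⟩ := h.meet i j hR
          have hv := Finset.mem_inter.1 hv
          have := Finset.single_le_sum hnn hv.1
          simpa [hR, hv.2] using this
        · exact Finset.sum_nonneg hnn
    _ = ∑ v ∈ ed i, ∑ j, (if R i j ∧ v ∈ ed j then p j else 0) := Finset.sum_comm
    _ ≤ ∑ v ∈ ed i, a := Finset.sum_le_sum fun v hv => h.kap i v hv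
    _ = (ed i).card * a := by simp
    _ ≤ k * a := mul_le_mul_of_nonneg_right (by exact_mod_cast h.card i) ha

/-- valid selections for the edge set `H` -/
def Valid (ed : I → Finset V) (R : I → I → Prop) (H : Finset (Finset V)) (C : Finset I) : Prop :=
  (∀ e ∈ H, ∃ i ∈ C, ed i = e) ∧ (∀ i ∈ C, ed i ∈ H) ∧
  (∀ i ∈ C, ∀ j ∈ C, ed i = ed j → i = j) ∧ ∀ i ∈ C, ∀ j ∈ C, ¬ R i j

/-- weighted count of valid selections -/
noncomputable def W (ed : I → Finset V) (R : I → I → Prop) (p : I → ℝ) (H : Finset (Finset V)) : ℝ :=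
  ∑ C : Finset I, if Valid ed R H C then ∏ i ∈ C, p i else 0

lemma W_nonneg (hp : ∀ i, 0 < p i) (H : Finset (Finset V)) : 0 ≤ W ed R p H := by
  apply Finset.sum_nonneg; intro C _; split_ifs
  · exact Finset.prod_nonneg fun i _ => (hp i).le
  · exact le_rfl

lemma W_erase (h : St k ed R E p a m τ) (H : Finset (Finset V)) (j : I) :
    ∑ C : Finset I, (if Valid ed R H C ∧ j ∈ C then ∏ i ∈ C, p i else 0) ≤ p j * W ed R p (H.erase (ed j)) := by
  rw [← Finset.sum_filter]
  unfold W
  rw [← Finset.sum_filter, Finset.mul_sum]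
  have hinj : Set.InjOn (fun C : Finset I => C.erase j)
      (Finset.univ.filter (fun C => Valid ed R H C ∧ j ∈ C) : Finset (Finset I)) := by
    intro C hC C' hC' heq
    have hC := (Finset.mem_filter.1 (Finset.mem_coe.1 hC)).2.2
    have hC' := (Finset.mem_filter.1 (Finset.mem_coe.1 hC')).2.2
    rw [← Finset.insert_erase hC, ← Finset.insert_erase hC']
    simp only at heq
    rw [heq]
  calc ∑ C ∈ Finset.univ.filter (fun C => Valid ed R H C ∧ j ∈ C), ∏ i ∈ C, p i
      = ∑ C ∈ Finset.univ.filter (fun C => Valid ed R H C ∧ j ∈ C), p j * ∏ i ∈ C.erase j, p i := by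
        apply Finset.sum_congr rfl
        intro C hC
        rw [Finset.mul_prod_erase _ _ (Finset.mem_filter.1 hC).2.2]
    _ = ∑ C ∈ (Finset.univ.filter (fun C => Valid ed R H C ∧ j ∈ C)).image (fun C : Finset I => C.erase j),
          p j * ∏ i ∈ C, p i := by rw [Finset.sum_image hinj]
    _ ≤ _ := by
        apply Finset.sum_le_sum_of_subset_of_nonneg
        · intro D hD
          obtain ⟨C, hC, rfl⟩ := Finset.mem_image.1 hD
          obtain ⟨-, ⟨h1, h2, h3, h4⟩, hj⟩ := Finset.mem_filter.1 hC
          refine Finset.mem_filter.2 ⟨Finset.mem_univ _, ?_, ?_, ?_, ?_⟩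
          · intro e he
            obtain ⟨i, hi, hie⟩ := h1 e (Finset.mem_of_mem_erase he)
            refine ⟨i, Finset.mem_erase.2 ⟨?_, hi⟩, hie⟩
            rintro rfl
            exact (Finset.mem_erase.1 he).1 hie.symm
          · intro i hi
            have hi := Finset.mem_erase.1 hi
            exact Finset.mem_erase.2 ⟨fun hh => hi.1 (h3 i hi.2 j hj hh), h2 i hi.2⟩
          · intro i hi i' hi'
            exact h3 i (Finset.mem_of_mem_erase hi) i' (Finset.mem_of_mem_erase hi')
          · intro i hi i' hi'
            exact h4 i (Finset.mem_of_mem_erase hi) i' (Finset.mem_of_mem_erase hi')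
        · intro D _ _
          exact mul_nonneg (h.pos j).le (Finset.prod_nonneg fun i _ => (h.pos i).le)

lemma W_insert (h : St k ed R E p a m τ) (H : Finset (Finset V)) (e : Finset V) (he : e ∉ H) :
    ∑ C : Finset I, (if Valid ed R H C then (∏ i ∈ C, p i) *
      ∑ i, (if ed i = e ∧ ∀ j ∈ C, ¬ R i j then p i else 0) else 0) ≤ W ed R p (insert e H) := by
  have hL : ∑ C : Finset I, (if Valid ed R H C then (∏ i ∈ C, p i) *
      ∑ i, (if ed i = e ∧ ∀ j ∈ C, ¬ R i j then p i else 0) else 0)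
      = ∑ x : Finset I × I, (if Valid ed R H x.1 ∧ ed x.2 = e ∧ ∀ j ∈ x.1, ¬ R x.2 j then
        (∏ i ∈ x.1, p i) * p x.2 else 0) := by
    rw [Fintype.sum_prod_type]
    apply Finset.sum_congr rfl
    intro C _
    by_cases hC : Valid ed R H C
    · simp only [hC, if_true, true_and, Finset.mul_sum]
      apply Finset.sum_congr rfl
      intro i _
      split_ifs <;> simp
    · simp [hC]
  rw [hL, ← Finset.sum_filter]
  unfold W
  rw [← Finset.sum_filter]
  set S := (Finset.univ : Finset (Finset I × I)).filter
    (fun x => Valid ed R H x.1 ∧ ed x.2 = e ∧ ∀ j ∈ x.1, ¬ R x.2 j) with hS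
  have hnm : ∀ x ∈ S, x.2 ∉ x.1 := by
    intro x hx hm
    obtain ⟨-, ⟨h1, h2, h3, h4⟩, hxe, -⟩ := Finset.mem_filter.1 hx
    exact he (hxe ▸ h2 _ hm)
  have hinj : Set.InjOn (fun x : Finset I × I => insert x.2 x.1) (S : Set (Finset I × I)) := by
    intro x hx y hy hxy
    have hx := Finset.mem_coe.1 hx
    have hy := Finset.mem_coe.1 hy
    obtain ⟨-, ⟨h1, h2, h3, h4⟩, hxe, -⟩ := Finset.mem_filter.1 hx
    obtain ⟨-, ⟨h1', h2', h3', h4'⟩, hye, -⟩ := Finset.mem_filter.1 hy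
    simp only at hxy
    have h5 : x.2 = y.2 := by
      have : x.2 ∈ insert y.2 y.1 := hxy ▸ Finset.mem_insert_self _ _
      rcases Finset.mem_insert.1 this with h | h
      · exact h
      · exact absurd (hxe ▸ h2' _ h) he
    have h6 : x.1 = y.1 := by
      rw [← Finset.erase_insert (hnm x hx), hxy, h5, Finset.erase_insert (hnm y hy)]
    exact Prod.ext h6 h5
  calc ∑ x ∈ S, (∏ i ∈ x.1, p i) * p x.2 = ∑ x ∈ S, ∏ i ∈ insert x.2 x.1, p i := by
        apply Finset.sum_congr rfl
        intro x hx
        rw [Finset.prod_insert (hnm x hx), mul_comm]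
    _ = ∑ C ∈ S.image (fun x : Finset I × I => insert x.2 x.1), ∏ i ∈ C, p i := by rw [Finset.sum_image hinj]
    _ ≤ _ := by
        apply Finset.sum_le_sum_of_subset_of_nonneg
        · intro D hD
          obtain ⟨x, hx, rfl⟩ := Finset.mem_image.1 hD
          obtain ⟨-, ⟨h1, h2, h3, h4⟩, hxe, hok⟩ := Finset.mem_filter.1 hx
          refine Finset.mem_filter.2 ⟨Finset.mem_univ _, ?_, ?_, ?_, ?_⟩
          · intro f hf
            rcases Finset.mem_insert.1 hf with rfl | hf
            · exact ⟨x.2, Finset.mem_insert_self _ _, hxe⟩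
            · obtain ⟨i, hi, hie⟩ := h1 f hf
              exact ⟨i, Finset.mem_insert_of_mem hi, hie⟩
          · intro i hi
            rcases Finset.mem_insert.1 hi with rfl | hi
            · rw [hxe]; exact Finset.mem_insert_self _ _
            · exact Finset.mem_insert_of_mem (h2 i hi)
          · intro i hi j hj hij
            rcases Finset.mem_insert.1 hi with rfl | hi <;> rcases Finset.mem_insert.1 hj with rfl | hj
            · rfl
            · exact absurd (hxe ▸ hij ▸ h2 j hj) he
            · exact absurd (hxe ▸ hij ▸ h2 i hi) he
            · exact h3 i hi j hj hij
          · intro i hi j hj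
            rcases Finset.mem_insert.1 hi with rfl | hi <;> rcases Finset.mem_insert.1 hj with rfl | hj
            · exact fun hr => h.ne _ _ hr rfl
            · exact hok j hj
            · exact fun hr => hok i hi (h.symm _ _ hr)
            · exact h4 i hi j hj
        · intro D _ _
          exact Finset.prod_nonneg fun i _ => (h.pos i).le

/-- final step by weighted counting -/
lemma finish (h : St k ed R E p a m τ) (ha : 0 ≤ a) (hka : 4 * k * a ≤ 1) :
    ∃ C : Set I, (∀ e ∈ E, ∃ i ∈ C, ed i = e) ∧ ∀ i ∈ C, ∀ j ∈ C, ¬ R i j := by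
  have hmain : ∀ N : ℕ, ∀ H : Finset (Finset V), H.card ≤ N → ∀ e ∈ E, e ∉ H →
      1 / 2 * W ed R p H ≤ W ed R p (insert e H) := by
    intro N
    induction N using Nat.strong_induction_on with
    | _ N ih =>
    intro H hHN e he heH
    refine le_trans ?_ (W_insert h H e heH)
    have hsub : ∀ j, ed j ∈ H → W ed R p (H.erase (ed j)) ≤ 2 * W ed R p H := by
      intro j hj
      have := ih (H.erase (ed j)).card (lt_of_lt_of_le (Finset.card_erase_lt_of_mem hj) hHN)
        (H.erase (ed j)) le_rfl (ed j) (h.memE j) (Finset.notMem_erase _ _)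
      rw [Finset.insert_erase hj] at this
      linarith
    have hWn := W_nonneg (ed := ed) (R := R) h.pos H
    -- lower bound on the inner sum
    have hinner : ∀ C : Finset I, 1 - ∑ i, ∑ j, (if ed i = e ∧ R i j ∧ j ∈ C then p i else 0)
        ≤ ∑ i, (if ed i = e ∧ ∀ j ∈ C, ¬ R i j then p i else 0) := by
      intro C
      rw [← h.sum e he, sub_le_iff_le_add, ← Finset.sum_add_distrib]
      apply Finset.sum_le_sum
      intro i _
      have hnn : ∀ j ∈ Finset.univ, 0 ≤ (if ed i = e ∧ R i j ∧ j ∈ C then p i else 0) := by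
        intro j _; split_ifs
        · exact (h.pos i).le
        · exact le_rfl
      by_cases hie : ed i = e
      · by_cases hex : ∀ j ∈ C, ¬ R i j
        · rw [if_pos hie, if_pos ⟨hie, hex⟩]
          linarith [Finset.sum_nonneg hnn]
        · rw [if_pos hie, if_neg (fun hh => hex hh.2), zero_add]
          push Not at hex
          obtain ⟨j, hj, hR⟩ := hex
          have := Finset.single_le_sum hnn (Finset.mem_univ j)
          simpa [hie, hR, hj] using this
      · rw [if_neg hie, if_neg (fun hh => hie hh.1), zero_add]
        exact Finset.sum_nonneg hnn
    have h1 : W ed R p H - ∑ i, (if ed i = e then p i * ∑ j, (if R i j then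
          ∑ C : Finset I, (if Valid ed R H C ∧ j ∈ C then ∏ i ∈ C, p i else 0) else 0) else 0)
        ≤ ∑ C : Finset I, (if Valid ed R H C then (∏ i ∈ C, p i) *
          ∑ i, (if ed i = e ∧ ∀ j ∈ C, ¬ R i j then p i else 0) else 0) := by
      have hre : ∑ i, (if ed i = e then p i * ∑ j, (if R i j then
          ∑ C : Finset I, (if Valid ed R H C ∧ j ∈ C then ∏ i ∈ C, p i else 0) else 0) else 0)
          = ∑ C : Finset I, (if Valid ed R H C then (∏ i ∈ C, p i) *
            ∑ i, ∑ j, (if ed i = e ∧ R i j ∧ j ∈ C then p i else 0) else 0) := by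
        have e1 : ∀ i, (if ed i = e then p i * ∑ j, (if R i j then
          ∑ C : Finset I, (if Valid ed R H C ∧ j ∈ C then ∏ i ∈ C, p i else 0) else 0) else 0)
          = ∑ j, ∑ C : Finset I, (if Valid ed R H C then (∏ i ∈ C, p i) * (if ed i = e ∧ R i j ∧ j ∈ C then p i else 0) else 0) := by
          intro i
          split_ifs with hie
          · rw [Finset.mul_sum]
            apply Finset.sum_congr rfl
            intro j _
            split_ifs with hR
            · rw [Finset.mul_sum]
              apply Finset.sum_congr rfl
              intro C _
              by_cases hv : Valid ed R H C <;> by_cases hj : j ∈ C <;> simp [hv, hj, hie, hR, mul_comm]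
            · simp [hR]
          · simp [hie]
        simp only [e1]
        have e2 : ∀ i, (∑ j, ∑ C : Finset I, (if Valid ed R H C then (∏ i ∈ C, p i) * (if ed i = e ∧ R i j ∧ j ∈ C then p i else 0) else 0))
          = ∑ C : Finset I, ∑ j, (if Valid ed R H C then (∏ i ∈ C, p i) * (if ed i = e ∧ R i j ∧ j ∈ C then p i else 0) else 0) := fun i => Finset.sum_comm
        simp only [e2]
        rw [Finset.sum_comm]
        apply Finset.sum_congr rfl
        intro C _
        split_ifs with hv
        · rw [Finset.mul_sum]
          apply Finset.sum_congr rfl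
          intro i _
          rw [Finset.mul_sum]
        · simp
      rw [hre]
      unfold W
      rw [← Finset.sum_sub_distrib]
      apply Finset.sum_le_sum
      intro C _
      split_ifs
      · have hp0 : 0 ≤ ∏ i ∈ C, p i := Finset.prod_nonneg fun i _ => (h.pos i).le
        have := mul_le_mul_of_nonneg_left (hinner C) hp0
        linarith
      · simp
    have h2 : ∑ i, (if ed i = e then p i * ∑ j, (if R i j then
          ∑ C : Finset I, (if Valid ed R H C ∧ j ∈ C then ∏ i ∈ C, p i else 0) else 0) else 0)
        ≤ 1 / 2 * W ed R p H := by
      calc _ ≤ ∑ i, (if ed i = e then p i else 0) * (1 / 2 * W ed R p H) := by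
            apply Finset.sum_le_sum
            intro i _
            split_ifs with hie
            · apply mul_le_mul_of_nonneg_left _ (h.pos i).le
              calc ∑ j, (if R i j then ∑ C : Finset I, (if Valid ed R H C ∧ j ∈ C then ∏ i ∈ C, p i else 0) else 0)
                  ≤ ∑ j, (if R i j then p j else 0) * (2 * W ed R p H) := by
                    apply Finset.sum_le_sum
                    intro j _
                    split_ifs with hR
                    · by_cases hj : ed j ∈ H
                      · exact (W_erase h H j).trans (mul_le_mul_of_nonneg_left (hsub j hj) (h.pos j).le)
                      · refine le_trans (le_of_eq ?_) (mul_nonneg (h.pos j).le (by linarith))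
                        apply Finset.sum_eq_zero
                        intro C _
                        rw [if_neg]
                        rintro ⟨hv, hjC⟩
                        exact hj (hv.2.1 j hjC)
                    · simp
                _ = (∑ j, (if R i j then p j else 0)) * (2 * W ed R p H) := by rw [Finset.sum_mul]
                _ ≤ (k * a) * (2 * W ed R p H) := mul_le_mul_of_nonneg_right (h.K_le ha i) (by linarith)
                _ ≤ _ := by nlinarith
            · simp
        _ = _ := by rw [← Finset.sum_mul, h.sum e he, one_mul]
    linarith
  have hpos : ∀ H : Finset (Finset V), H ⊆ E → 0 < W ed R p H := by
    intro H
    induction H using Finset.induction_on with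
    | empty =>
      intro _
      have hv : Valid ed R ∅ (∅ : Finset I) := by simp [Valid]
      unfold W
      have := Finset.single_le_sum (f := fun C : Finset I => if Valid ed R ∅ C then ∏ i ∈ C, p i else 0)
        (fun C _ => by
          split_ifs
          · exact Finset.prod_nonneg fun i _ => (h.pos i).le
          · exact le_rfl) (Finset.mem_univ (∅ : Finset I))
      simp only [hv, if_true, Finset.prod_empty] at this
      linarith
    | insert e H he ih =>
      intro hsub
      have := hmain H.card H le_rfl e (hsub (Finset.mem_insert_self _ _)) he
      have := ih (fun x hx => hsub (Finset.mem_insert_of_mem hx))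
      linarith
  have hE := hpos E (Finset.Subset.refl _)
  have : ∃ C, Valid ed R E C := by
    by_contra hc
    push Not at hc
    simp [W, hc] at hE
  obtain ⟨C, h1, h2, h3, h4⟩ := this
  exact ⟨(C : Set I), fun e he => by simpa using h1 e he, fun i hi j hj => h4 i (by simpa using hi) j (by simpa using hj)⟩

end State
end Nib

namespace Nib

section Step
open Finset
open scoped Classical

lemma ite_nn {P : Prop} [Decidable P] {x : ℝ} (h : 0 ≤ x) : 0 ≤ (if P then x else 0) := by
  split_ifs
  · exact h
  · exact le_rfl

lemma sum_ite_card_le {X : Type} [Fintype X] (P : X → Prop) [DecidablePred P] (f : X → ℝ) (B : ℝ)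
    (n : ℕ) (hB : 0 ≤ B) (hf : ∀ x, f x ≤ B) (hc : (Finset.univ.filter P).card ≤ n) :
    ∑ x, (if P x then f x else 0) ≤ n * B := by
  rw [← Finset.sum_filter]
  calc _ ≤ ∑ x ∈ Finset.univ.filter P, B := Finset.sum_le_sum fun x _ => hf x
    _ = (Finset.univ.filter P).card * B := by simp
    _ ≤ _ := mul_le_mul_of_nonneg_right (by exact_mod_cast hc) hB

lemma sum_ite_le_of_uniq {X : Type} [Fintype X] (P : X → Prop) [DecidablePred P] (f : X → ℝ) (B : ℝ)
    (hB : 0 ≤ B) (hf : ∀ x, f x ≤ B) (hu : ∀ x y, P x → P y → x = y) :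
    ∑ x, (if P x then f x else 0) ≤ B := by
  have := sum_ite_card_le P f B 1 hB hf (Finset.card_le_one.2 fun x hx y hy =>
    hu x y (Finset.mem_filter.1 hx).2 (Finset.mem_filter.1 hy).2)
  simpa using this

variable {V I : Type} [Fintype I]

/-- total conflict weight of an item -/
noncomputable def Kt (R : I → I → Prop) (p : I → ℝ) (i : I) : ℝ := ∑ j, (if R i j then p j else 0)

/-- reweighted items -/
noncomputable def ww (R : I → I → Prop) (p : I → ℝ) (θ : ℝ) (i : I) : ℝ := p i * (1 + θ * Kt R p i)

/-- coefficients of the list form -/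
noncomputable def c1 (ed : I → Finset V) (R : I → I → Prop) (p : I → ℝ) (θ : ℝ) (e : Finset V) (l : I) : ℝ :=
  ∑ i, (if ed i = e ∧ R i l then ww R p θ i else 0)

/-- item `j` conflicts with `i` at the vertex `v` -/
def JJ (ed : I → Finset V) (R : I → I → Prop) (i : I) (v : V) (j : I) : Prop := R i j ∧ v ∈ ed j

/-- coins whose success decreases the contribution of `j` -/
def Cn (ed : I → Finset V) (R : I → I → Prop) (v : V) (j l : I) : Prop :=
  ed l = ed j ∨ (R j l ∧ v ∉ ed l)

noncomputable def d2 (ed : I → Finset V) (R : I → I → Prop) (p : I → ℝ) (θ : ℝ) (i : I) (v : V) (l : I) : ℝ :=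
  ∑ j, (if JJ ed R i v j ∧ Cn ed R v j l then ww R p θ j else 0)

noncomputable def w3 (ed : I → Finset V) (R : I → I → Prop) (p : I → ℝ) (θ : ℝ) (i : I) (v : V) (x : I × I) : ℝ :=
  if JJ ed R i v x.1 ∧ Cn ed R v x.1 x.2 then ww R p θ x.1 else 0

def N3 (ed : I → Finset V) (R : I → I → Prop) (i : I) (v : V) (x : I × I) (l : I) : Prop :=
  JJ ed R i v x.1 ∧ Cn ed R v x.1 x.2 ∧
    ((Cn ed R v x.1 l ∧ l ≠ x.2) ∨ (ed x.2 = ed x.1 ∧ R x.2 l))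

/-- the three kinds of bad events -/
def B1 (ed : I → Finset V) (R : I → I → Prop) (p : I → ℝ) (θ : ℝ) (e : Finset V) (ω : I → Bool) : Prop :=
  ∑ l, θ * p l * c1 ed R p θ e l + θ ^ 2 ≤ ∑ l, if ω l then c1 ed R p θ e l else 0

def B2 (ed : I → Finset V) (R : I → I → Prop) (p : I → ℝ) (θ : ℝ) (i : I) (v : V) (ω : I → Bool) : Prop :=
  ∑ l, θ * p l * (-(d2 ed R p θ i v l)) + θ ^ 2 ≤ ∑ l, if ω l then -(d2 ed R p θ i v l) else 0

def B3 (k : ℕ) (ed : I → Finset V) (R : I → I → Prop) (p : I → ℝ) (θ : ℝ) (i : I) (v : V) (ω : I → Bool) : Prop :=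
  16 * (4 * θ ^ 2 * (k + 1) ^ 2) + θ ^ 2 ≤
    ∑ x : I × I, if (ω x.2 = true ∧ ∃ l, N3 ed R i v x l ∧ ω l = true) then w3 ed R p θ i v x else 0

variable {k : ℕ} {ed : I → Finset V} {R : I → I → Prop}
    {E : Finset (Finset V)} {p : I → ℝ} {a m τ θ : ℝ}

/-- standing numeric assumptions -/
structure Num (k : ℕ) (a m θ : ℝ) : Prop where
  a0 : 0 ≤ a
  a1 : a ≤ 1
  k1 : 1 ≤ k
  θ0 : 0 < θ
  θk : θ * (k + 1) ≤ 1 / 2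
  m0 : 0 < m

lemma Num.k1r (hn : Num k a m θ) : (1 : ℝ) ≤ k := by exact_mod_cast hn.k1

lemma Num.θ1 (hn : Num k a m θ) : θ ≤ 1 / 4 := by nlinarith [hn.k1r, hn.θk, hn.θ0]

lemma Kt_nonneg (h : St k ed R E p a m τ) (i : I) : 0 ≤ Kt R p i :=
  Finset.sum_nonneg fun j _ => ite_nn (h.pos j).le

lemma Kt_le (h : St k ed R E p a m τ) (hn : Num k a m θ) (i : I) : Kt R p i ≤ k := by
  have := h.K_le hn.a0 i
  have : (k:ℝ) * a ≤ k := by nlinarith [hn.a1, hn.k1r]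
  exact (h.K_le hn.a0 i).trans this

lemma θKt_le (h : St k ed R E p a m τ) (hn : Num k a m θ) (i : I) : θ * Kt R p i ≤ 1 := by
  have := mul_le_mul_of_nonneg_left (Kt_le h hn i) hn.θ0.le
  nlinarith [hn.θk, hn.θ0]

lemma ww_nonneg (h : St k ed R E p a m τ) (hn : Num k a m θ) (i : I) : 0 ≤ ww R p θ i :=
  mul_nonneg (h.pos i).le (by have := mul_nonneg hn.θ0.le (Kt_nonneg h i); linarith)

lemma le_ww (h : St k ed R E p a m τ) (hn : Num k a m θ) (i : I) : p i ≤ ww R p θ i := by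
  have := mul_nonneg (h.pos i).le (mul_nonneg hn.θ0.le (Kt_nonneg h i))
  unfold ww; linarith

lemma ww_le (h : St k ed R E p a m τ) (hn : Num k a m θ) (i : I) : ww R p θ i ≤ 2 * p i := by
  have := mul_le_mul_of_nonneg_left (θKt_le h hn i) (h.pos i).le
  unfold ww; linarith

lemma ww_le_m (h : St k ed R E p a m τ) (hn : Num k a m θ) (i : I) : ww R p θ i ≤ 2 * m := by
  linarith [ww_le h hn i, h.hi i]

lemma p_le_one (h : St k ed R E p a m τ) (i : I) : p i ≤ 1 := by
  rw [← h.sum (ed i) (h.memE i)]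
  have := Finset.single_le_sum (f := fun j => if ed j = ed i then p j else 0)
    (fun j _ => ite_nn (h.pos j).le) (Finset.mem_univ i)
  simpa using this

lemma pi0 (h : St k ed R E p a m τ) (hn : Num k a m θ) (i : I) : 0 ≤ θ * p i :=
  mul_nonneg hn.θ0.le (h.pos i).le

lemma pi1 (h : St k ed R E p a m τ) (hn : Num k a m θ) (i : I) : θ * p i ≤ 1 := by
  nlinarith [p_le_one h i, hn.θ1, hn.θ0, h.pos i]

lemma c1_nonneg (h : St k ed R E p a m τ) (hn : Num k a m θ) (e : Finset V) (l : I) :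
    0 ≤ c1 ed R p θ e l := Finset.sum_nonneg fun j _ => ite_nn (ww_nonneg h hn j)

lemma c1_le (h : St k ed R E p a m τ) (hn : Num k a m θ) (e : Finset V) (l : I) :
    c1 ed R p θ e l ≤ 2 * m := by
  unfold c1
  apply sum_ite_le_of_uniq _ _ _ (by linarith [hn.m0]) (ww_le_m h hn)
  rintro i j ⟨hi, hR⟩ ⟨hj, hR'⟩
  exact h.uniq l i j (h.symm _ _ hR) (h.symm _ _ hR') (hi.trans hj.symm)

lemma E_c1 (e : Finset V) :
    ∑ l, θ * p l * c1 ed R p θ e l = ∑ i, (if ed i = e then ww R p θ i * (θ * Kt R p i) else 0) := by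
  simp only [c1, Finset.mul_sum]
  rw [Finset.sum_comm]
  apply Finset.sum_congr rfl
  intro i _
  split_ifs with hi
  · unfold Kt
    rw [Finset.mul_sum, Finset.mul_sum]
    apply Finset.sum_congr rfl
    intro l _
    by_cases hR : R i l <;> simp [hi, hR]; ring
  · simp [hi]

lemma rho_mono (_hn : Num k a m θ) {x : ℝ} (hx : θ ^ 3 / (64 * (k + 1) ^ 2 * m) ≤ x) :
    Real.exp (-x) ≤ Real.exp (-(θ ^ 3 / (64 * (k + 1) ^ 2 * m))) :=
  Real.exp_le_exp.2 (by linarith)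

lemma Pr_B1 (h : St k ed R E p a m τ) (hn : Num k a m θ) (e : Finset V) (he : e ∈ E) :
    Pr (fun l => θ * p l) (B1 ed R p θ e) ≤ Real.exp (-(θ ^ 3 / (64 * (k + 1) ^ 2 * m))) := by
  have hk := hn.k1r
  have hθ := hn.θ0
  have hm := hn.m0
  have hb : ∑ l, θ * p l * |c1 ed R p θ e l| ≤ 2 * θ * k := by
    simp only [abs_of_nonneg (c1_nonneg h hn e _)]
    rw [E_c1]
    calc _ ≤ ∑ i, (if ed i = e then p i else 0) * (2 * θ * k) := by
          apply Finset.sum_le_sum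
          intro i _
          split_ifs
          · have h1 := mul_le_mul_of_nonneg_left (Kt_le h hn i) hn.θ0.le
            have h2 := mul_le_mul (ww_le h hn i) h1 (mul_nonneg hn.θ0.le (Kt_nonneg h i)) (by linarith [h.pos i])
            linarith
          · simp
      _ = _ := by rw [← Finset.sum_mul, h.sum e he, one_mul]
  have := chernoff (pi0 h hn) (pi1 h hn) (c1 ed R p θ e) (2 * m) (2 * θ * k) (θ ^ 2)
    (by linarith [hn.m0]) (fun l => by rw [abs_of_nonneg (c1_nonneg h hn e l)]; exact c1_le h hn e l)
    hb (by positivity) (by positivity) (by nlinarith [hn.θ1])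
  refine this.trans (rho_mono hn ?_)
  have e1 : (θ ^ 2) ^ 2 / (4 * (2 * θ * k) * (2 * m)) = θ ^ 3 / (16 * k * m) := by
    field_simp; ring
  rw [e1]
  apply div_le_div_of_nonneg_left (by positivity) (by positivity)
  nlinarith [mul_nonneg hm.le (sq_nonneg (k:ℝ)), mul_pos hm (show (0:ℝ) < k by linarith)]

/-! second kind -/

lemma sum_same (h : St k ed R E p a m τ) (j : I) : ∑ l, (if ed l = ed j then p l else 0) = 1 :=
  h.sum _ (h.memE j)

lemma sum_Cn (h : St k ed R E p a m τ) (v : V) (j : I) :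
    ∑ l, (if Cn ed R v j l then p l else 0) = 1 + ∑ l, (if R j l ∧ v ∉ ed l then p l else 0) := by
  rw [← sum_same h j, ← Finset.sum_add_distrib]
  apply Finset.sum_congr rfl
  intro l _
  unfold Cn
  by_cases h1 : ed l = ed j
  · have : ¬ R j l := fun hR => h.ne _ _ hR h1.symm
    simp [h1, this]
  · simp [h1]

lemma Koff_le (h : St k ed R E p a m τ) (v : V) (j : I) :
    ∑ l, (if R j l ∧ v ∉ ed l then p l else 0) ≤ Kt R p j := by
  apply Finset.sum_le_sum
  intro l _
  by_cases h1 : R j l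
  · by_cases h2 : v ∈ ed l
    · simp [h1, h2, (h.pos l).le]
    · simp [h1, h2]
  · simp [h1]

lemma sum_Cn_le (h : St k ed R E p a m τ) (hn : Num k a m θ) (v : V) (j : I) :
    ∑ l, (if Cn ed R v j l then p l else 0) ≤ k + 1 := by
  rw [sum_Cn h]
  linarith [Koff_le h v j, Kt_le h hn j]

lemma sum_J_le (h : St k ed R E p a m τ) (hn : Num k a m θ) (i : I) (v : V) (hv : v ∈ ed i) :
    ∑ j, (if JJ ed R i v j then ww R p θ j else 0) ≤ 2 := by
  calc _ ≤ ∑ j, 2 * (if JJ ed R i v j then p j else 0) := by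
        apply Finset.sum_le_sum; intro j _; split_ifs
        · exact ww_le h hn j
        · simp
    _ = 2 * ∑ j, (if R i j ∧ v ∈ ed j then p j else 0) := by
        rw [Finset.mul_sum]; apply Finset.sum_congr rfl; intro j _
        by_cases hJ : JJ ed R i v j
        · rw [if_pos hJ, if_pos (show R i j ∧ v ∈ ed j from hJ)]
        · rw [if_neg hJ, if_neg (show ¬ (R i j ∧ v ∈ ed j) from hJ)]
    _ ≤ _ := by linarith [h.kap i v hv, hn.a1]

lemma J_inj (h : St k ed R E p a m τ) (i : I) (v : V) {j j' : I} (hj : JJ ed R i v j)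
    (hj' : JJ ed R i v j') (he : ed j = ed j') : j = j' := h.uniq i j j' hj.1 hj'.1 he

lemma d2_nonneg (h : St k ed R E p a m τ) (hn : Num k a m θ) (i : I) (v : V) (l : I) :
    0 ≤ d2 ed R p θ i v l := Finset.sum_nonneg fun j _ => ite_nn (ww_nonneg h hn j)

lemma d2_le (h : St k ed R E p a m τ) (hn : Num k a m θ) (i : I) (v : V) (l : I) :
    d2 ed R p θ i v l ≤ 2 * m * (k + 1) := by
  have hm := hn.m0
  have hcard : (Finset.univ.filter (fun j => JJ ed R i v j ∧ Cn ed R v j l)).card ≤ k + 1 := by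
    have h1 : (Finset.univ.filter (fun j => JJ ed R i v j ∧ ed l = ed j)).card ≤ 1 := by
      apply Finset.card_le_one.2
      intro x hx y hy
      have hx := (Finset.mem_filter.1 hx).2
      have hy := (Finset.mem_filter.1 hy).2
      exact J_inj h i v hx.1 hy.1 (hx.2.symm.trans hy.2)
    have h2 : (Finset.univ.filter (fun j => JJ ed R i v j ∧ R j l ∧ v ∉ ed l)).card ≤ k := by
      refine le_trans ?_ (h.card l)
      have hch : ∀ j, R j l → ∃ u, u ∈ ed j ∩ ed l := fun j hj => h.meet j l hj
      have : Nonempty V := ⟨v⟩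
      choose! u hu using hch
      apply Finset.card_le_card_of_injOn u
      · intro j hj
        have hj := (Finset.mem_filter.1 (Finset.mem_coe.1 hj)).2
        exact Finset.mem_coe.2 (Finset.mem_inter.1 (hu j hj.2.1)).2
      · intro j hj j' hj' huu
        have hj := (Finset.mem_filter.1 (Finset.mem_coe.1 hj)).2
        have hj' := (Finset.mem_filter.1 (Finset.mem_coe.1 hj')).2
        apply J_inj h i v hj.1 hj'.1
        by_contra hne
        have hl := h.lin j j' hne
        have hu1 := Finset.mem_inter.1 (hu j hj.2.1)
        have hu2 := Finset.mem_inter.1 (hu j' hj'.2.1)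
        have huv : u j = v := Finset.card_le_one.1 hl (u j)
          (Finset.mem_inter.2 ⟨hu1.1, huu ▸ hu2.1⟩) v (Finset.mem_inter.2 ⟨hj.1.2, hj'.1.2⟩)
        exact hj.2.2 (huv ▸ hu1.2)
    have hsub : (Finset.univ.filter (fun j => JJ ed R i v j ∧ Cn ed R v j l)) ⊆
        (Finset.univ.filter (fun j => JJ ed R i v j ∧ ed l = ed j)) ∪
        (Finset.univ.filter (fun j => JJ ed R i v j ∧ R j l ∧ v ∉ ed l)) := by
      intro j hj
      obtain ⟨-, hJ, hC⟩ := Finset.mem_filter.1 hj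
      rcases hC with hC | hC
      · exact Finset.mem_union_left _ (Finset.mem_filter.2 ⟨Finset.mem_univ _, hJ, hC⟩)
      · exact Finset.mem_union_right _ (Finset.mem_filter.2 ⟨Finset.mem_univ _, hJ, hC⟩)
    have := (Finset.card_le_card hsub).trans (Finset.card_union_le _ _)
    omega
  have := sum_ite_card_le (fun j => JJ ed R i v j ∧ Cn ed R v j l) (ww R p θ) (2 * m) (k + 1)
    (by linarith) (ww_le_m h hn) hcard
  push_cast at this
  unfold d2
  linarith

lemma E_d2 (h : St k ed R E p a m τ) (i : I) (v : V) :
    ∑ l, θ * p l * d2 ed R p θ i v l = ∑ j, (if JJ ed R i v j then ww R p θ j *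
      (θ * (1 + ∑ l, (if R j l ∧ v ∉ ed l then p l else 0))) else 0) := by
  simp only [d2, Finset.mul_sum]
  rw [Finset.sum_comm]
  apply Finset.sum_congr rfl
  intro j _
  rw [← sum_Cn h v j]
  split_ifs with hj
  · rw [Finset.mul_sum, Finset.mul_sum]
    apply Finset.sum_congr rfl
    intro l _
    by_cases hC : Cn ed R v j l <;> simp [hj, hC]; ring
  · simp [hj]

lemma Pr_B2 (h : St k ed R E p a m τ) (hn : Num k a m θ) (i : I) (v : V) (hv : v ∈ ed i) :
    Pr (fun l => θ * p l) (B2 ed R p θ i v) ≤ Real.exp (-(θ ^ 3 / (64 * (k + 1) ^ 2 * m))) := by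
  have hk := hn.k1r
  have hθ := hn.θ0
  have hm := hn.m0
  have hb : ∑ l, θ * p l * |-(d2 ed R p θ i v l)| ≤ 2 * θ * (k + 1) := by
    simp only [abs_neg, abs_of_nonneg (d2_nonneg h hn i v _)]
    rw [E_d2 h]
    calc _ ≤ ∑ j, (if JJ ed R i v j then ww R p θ j else 0) * (θ * (k + 1)) := by
          apply Finset.sum_le_sum
          intro j _
          split_ifs
          · apply mul_le_mul_of_nonneg_left _ (ww_nonneg h hn j)
            rw [← sum_Cn h]
            exact mul_le_mul_of_nonneg_left (sum_Cn_le h hn v j) hθ.le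
          · simp
      _ ≤ 2 * (θ * (k + 1)) := by
          rw [← Finset.sum_mul]
          exact mul_le_mul_of_nonneg_right (sum_J_le h hn i v hv) (by positivity)
      _ = _ := by ring
  have := chernoff (pi0 h hn) (pi1 h hn) (fun l => -(d2 ed R p θ i v l)) (2 * m * (k + 1)) (2 * θ * (k + 1)) (θ ^ 2)
    (by positivity) (fun l => by rw [abs_neg, abs_of_nonneg (d2_nonneg h hn i v l)]; exact d2_le h hn i v l)
    hb (by positivity) (by positivity) (by nlinarith [hn.θ1])
  refine this.trans (rho_mono hn ?_)
  have e1 : (θ ^ 2) ^ 2 / (4 * (2 * θ * (k + 1)) * (2 * m * (k + 1))) = θ ^ 3 / (16 * (k + 1) ^ 2 * m) := by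
    field_simp; ring
  rw [e1]
  apply div_le_div_of_nonneg_left (by positivity) (by positivity)
  nlinarith [mul_pos hm (show (0:ℝ) < (k + 1) ^ 2 by positivity)]

lemma G3_le (h : St k ed R E p a m τ) (hn : Num k a m θ) (i : I) (v : V) (l' : I) :
    ∑ x : I × I, (if N3 ed R i v x l' then w3 ed R p θ i v x * (θ * p x.2) else 0)
    ≤ θ * (k + 1) * d2 ed R p θ i v l' +
      ∑ l, (if R l l' then θ * p l else 0) * ∑ j, (if JJ ed R i v j ∧ ed l = ed j then ww R p θ j else 0) := by
  have hpt : ∀ x : I × I, (if N3 ed R i v x l' then w3 ed R p θ i v x * (θ * p x.2) else 0) ≤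
      (if JJ ed R i v x.1 ∧ Cn ed R v x.1 l' then ww R p θ x.1 else 0) * (if Cn ed R v x.1 x.2 then θ * p x.2 else 0)
      + (if R x.2 l' then θ * p x.2 else 0) * (if JJ ed R i v x.1 ∧ ed x.2 = ed x.1 then ww R p θ x.1 else 0) := by
    rintro ⟨j, l⟩
    have hw := ww_nonneg h hn j
    have hp := pi0 h hn l
    have hwp := mul_nonneg hw hp
    have t1 : 0 ≤ (if JJ ed R i v j ∧ Cn ed R v j l' then ww R p θ j else 0) * (if Cn ed R v j l then θ * p l else 0) :=
      mul_nonneg (ite_nn hw) (ite_nn hp)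
    have t2 : 0 ≤ (if R l l' then θ * p l else 0) * (if JJ ed R i v j ∧ ed l = ed j then ww R p θ j else 0) :=
      mul_nonneg (ite_nn hp) (ite_nn hw)
    simp only
    by_cases hN : N3 ed R i v (j, l) l'
    · rw [if_pos hN]
      obtain ⟨hJ, hC, hor⟩ := hN
      simp only at hJ hC hor
      unfold w3
      rw [if_pos ⟨hJ, hC⟩]
      rcases hor with ⟨hC', -⟩ | ⟨hed, hR⟩
      · rw [if_pos ⟨hJ, hC'⟩, if_pos hC]; linarith
      · rw [if_pos hR, if_pos (show JJ ed R i v j ∧ ed l = ed j from ⟨hJ, hed⟩)]; linarith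
    · rw [if_neg hN]; linarith
  refine (Finset.sum_le_sum fun x _ => hpt x).trans ?_
  rw [Finset.sum_add_distrib, Fintype.sum_prod_type, Fintype.sum_prod_type_right]
  apply add_le_add
  · unfold d2
    rw [Finset.mul_sum]
    apply Finset.sum_le_sum
    intro j _
    simp only
    rw [← Finset.mul_sum, mul_comm]
    apply mul_le_mul_of_nonneg_right _ (ite_nn (ww_nonneg h hn j))
    calc ∑ l, (if Cn ed R v j l then θ * p l else 0) = θ * ∑ l, (if Cn ed R v j l then p l else 0) := by
          rw [Finset.mul_sum]; apply Finset.sum_congr rfl; intro l _; split_ifs <;> simp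
      _ ≤ _ := mul_le_mul_of_nonneg_left (sum_Cn_le h hn v j) hn.θ0.le
  · apply le_of_eq
    apply Finset.sum_congr rfl
    intro l _
    simp only
    rw [← Finset.mul_sum]

lemma swap_sum (R : I → I → Prop) (q Q : I → ℝ) :
    ∑ l', q l' * ∑ l, (if R l l' then q l else 0) * Q l
      = ∑ l, q l * (∑ l', (if R l l' then q l' else 0)) * Q l := by
  simp only [Finset.mul_sum, Finset.sum_mul]
  rw [Finset.sum_comm]
  apply Finset.sum_congr rfl
  intro l _
  apply Finset.sum_congr rfl
  intro l' _
  split_ifs <;> ring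

lemma Pr_B3 (h : St k ed R E p a m τ) (hn : Num k a m θ) (i : I) (v : V) (hv : v ∈ ed i) :
    Pr (fun l => θ * p l) (B3 k ed R p θ i v) ≤ Real.exp (-(θ ^ 3 / (64 * (k + 1) ^ 2 * m))) := by
  have hk := hn.k1r
  have hθ := hn.θ0
  have hm := hn.m0
  have hθ1 := hn.θ1
  set t : ℝ := 1 / (64 * (k + 1) ^ 2 * m) with ht
  have ht0 : 0 ≤ t := by positivity
  have htm : t * (m * (k + 1) ^ 2) = 1 / 64 := by rw [ht]; field_simp
  have hkk : (k : ℝ) + 1 ≤ (k + 1) ^ 2 := by nlinarith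
  have hmul : ∀ x : ℝ, x ≤ m * (k + 1) ^ 2 → t * x ≤ 1 / 64 := fun x hx => by
    rw [← htm]; exact mul_le_mul_of_nonneg_left hx ht0
  -- sum over j with prescribed edge
  have hq : ∀ l, ∑ j, (if JJ ed R i v j ∧ ed l = ed j then ww R p θ j else 0) ≤ 2 * m := by
    intro l
    apply sum_ite_le_of_uniq _ _ _ (by linarith) (ww_le_m h hn)
    rintro x y ⟨hx, hx'⟩ ⟨hy, hy'⟩
    exact J_inj h i v hx hy (hx'.symm.trans hy')
  have hRs : ∀ l', ∑ l, (if R l l' then θ * p l else 0) ≤ θ * k := by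
    intro l'
    calc ∑ l, (if R l l' then θ * p l else 0) = θ * Kt R p l' := by
          unfold Kt
          rw [Finset.mul_sum]; apply Finset.sum_congr rfl; intro l _
          by_cases hR : R l l'
          · simp [hR, h.symm _ _ hR]
          · have : ¬ R l' l := fun hh => hR (h.symm _ _ hh)
            simp [hR, this]
      _ ≤ _ := mul_le_mul_of_nonneg_left (Kt_le h hn l') hθ.le
  have hmk0 : 0 < m * (k + 1) ^ 2 := by positivity
  have hfin := quad_tail (π := fun l => θ * p l) (pi0 h hn) (pi1 h hn) (w3 ed R p θ i v)
    (fun x => by unfold w3; exact ite_nn (ww_nonneg h hn x.1)) (fun x : I × I => x.2) (N3 ed R i v)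
    (by
      rintro x l ⟨-, -, ⟨-, hne⟩ | ⟨-, hR⟩⟩
      · exact hne.symm
      · exact fun hh => h.ne _ _ hR (by rw [hh]))
    t (4 * θ ^ 2 * (k + 1) ^ 2) (θ ^ 2) ht0
    (by
      intro l
      have : ∑ x : I × I, (if x.2 = l then w3 ed R p θ i v x else 0) = d2 ed R p θ i v l := by
        rw [Fintype.sum_prod_type]
        unfold d2 w3
        apply Finset.sum_congr rfl
        intro j _
        simp
      rw [this]
      have h1 := d2_le h hn i v l
      have h2 := mul_le_mul_of_nonneg_left h1 ht0
      have h3 := hmul (m * (k + 1)) (mul_le_mul_of_nonneg_left hkk hm.le)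
      linarith)
    (by
      intro l'
      have h1 := G3_le h hn i v l'
      have h2 : ∑ l, (if R l l' then θ * p l else 0) * ∑ j, (if JJ ed R i v j ∧ ed l = ed j then ww R p θ j else 0)
          ≤ (θ * k) * (2 * m) := by
        calc _ ≤ ∑ l, (if R l l' then θ * p l else 0) * (2 * m) :=
              Finset.sum_le_sum fun l _ => mul_le_mul_of_nonneg_left (hq l) (ite_nn (pi0 h hn l))
          _ ≤ _ := by
              rw [← Finset.sum_mul]
              exact mul_le_mul_of_nonneg_right (hRs l') (by linarith)
      have h3 := mul_le_mul_of_nonneg_left (d2_le h hn i v l') (show 0 ≤ θ * (k + 1) by positivity)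
      have h4 : θ * (k + 1) * (2 * m * (k + 1)) + (θ * k) * (2 * m) ≤ 4 * θ * (m * (k + 1) ^ 2) := by
        have : 0 ≤ θ * m := by positivity
        nlinarith
      have h5 : 4 * θ * (m * (k + 1) ^ 2) ≤ m * (k + 1) ^ 2 := by nlinarith
      have h6 := hmul _ ((h1.trans (add_le_add h3 h2)).trans (h4.trans h5))
      linarith)
    (by
      calc _ ≤ ∑ l', θ * p l' * (θ * (k + 1) * d2 ed R p θ i v l' +
            ∑ l, (if R l l' then θ * p l else 0) * ∑ j, (if JJ ed R i v j ∧ ed l = ed j then ww R p θ j else 0)) :=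
            Finset.sum_le_sum fun l' _ => mul_le_mul_of_nonneg_left (G3_le h hn i v l') (pi0 h hn l')
        _ = θ * (k + 1) * ∑ l', θ * p l' * d2 ed R p θ i v l' +
            ∑ l, (θ * p l) * (∑ l', (if R l l' then θ * p l' else 0)) * ∑ j, (if JJ ed R i v j ∧ ed l = ed j then ww R p θ j else 0) := by
            simp only [mul_add, Finset.sum_add_distrib]
            congr 1
            · rw [Finset.mul_sum]; exact Finset.sum_congr rfl fun l _ => by ring
            · exact swap_sum R (fun l => θ * p l) _
        _ ≤ θ * (k + 1) * (2 * θ * (k + 1)) + (θ * k) * (2 * θ) := by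
            apply add_le_add
            · apply mul_le_mul_of_nonneg_left _ (by positivity)
              rw [E_d2 h]
              calc _ ≤ ∑ j, (if JJ ed R i v j then ww R p θ j else 0) * (θ * (k + 1)) := by
                    apply Finset.sum_le_sum
                    intro j _
                    split_ifs
                    · apply mul_le_mul_of_nonneg_left _ (ww_nonneg h hn j)
                      rw [← sum_Cn h]
                      exact mul_le_mul_of_nonneg_left (sum_Cn_le h hn v j) hθ.le
                    · simp
                _ ≤ 2 * (θ * (k + 1)) := by
                    rw [← Finset.sum_mul]
                    exact mul_le_mul_of_nonneg_right (sum_J_le h hn i v hv) (by positivity)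
                _ = _ := by ring
            · calc _ ≤ ∑ l, (θ * k) * ((θ * p l) * ∑ j, (if JJ ed R i v j ∧ ed l = ed j then ww R p θ j else 0)) := by
                    apply Finset.sum_le_sum
                    intro l _
                    have hq0 : 0 ≤ ∑ j, (if JJ ed R i v j ∧ ed l = ed j then ww R p θ j else 0) :=
                      Finset.sum_nonneg fun j _ => ite_nn (ww_nonneg h hn j)
                    have hr : ∑ l', (if R l l' then θ * p l' else 0) ≤ θ * k := by
                      refine le_trans (le_of_eq ?_) (hRs l)
                      apply Finset.sum_congr rfl
                      intro l' _
                      exact if_congr ⟨h.symm _ _, h.symm _ _⟩ rfl rfl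
                    have := mul_le_mul_of_nonneg_right (mul_le_mul_of_nonneg_left hr (pi0 h hn l)) hq0
                    linarith
                _ = (θ * k) * ∑ j, (if JJ ed R i v j then ww R p θ j else 0) * (θ * 1) := by
                    rw [← Finset.mul_sum]
                    congr 1
                    simp only [Finset.mul_sum]
                    rw [Finset.sum_comm]
                    apply Finset.sum_congr rfl
                    intro j _
                    rw [← sum_same h j, Finset.mul_sum, Finset.mul_sum]
                    apply Finset.sum_congr rfl
                    intro l _
                    by_cases hJ : JJ ed R i v j <;> by_cases hl : ed l = ed j <;> simp [hJ, hl]; ring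
                _ ≤ _ := by
                    apply mul_le_mul_of_nonneg_left _ (by positivity)
                    rw [← Finset.sum_mul]
                    have := mul_le_mul_of_nonneg_right (sum_J_le h hn i v hv) hθ.le
                    linarith
        _ ≤ _ := by nlinarith [sq_nonneg θ, mul_nonneg (sq_nonneg θ) (show (0:ℝ) ≤ k by linarith), mul_nonneg (sq_nonneg θ) (sq_nonneg (k:ℝ))])
  refine hfin.trans (rho_mono hn ?_)
  rw [ht]
  have : 1 / (64 * (k + 1) ^ 2 * m) * θ ^ 2 = θ ^ 2 / (64 * (k + 1) ^ 2 * m) := by ring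
  rw [this]
  apply div_le_div_of_nonneg_right _ (by positivity)
  nlinarith [sq_nonneg θ]

end Step
end Nib

namespace Nib

section Det
open Finset
open scoped Classical

variable {V I : Type} [Fintype I]

/-- the item wins: its coin succeeds and no conflicting coin does -/
def Win (R : I → I → Prop) (ω : I → Bool) (l : I) : Prop := ω l = true ∧ ∀ l', R l l' → ¬ ω l' = true

/-- the edge stays uncoloured -/
def Unc (ed : I → Finset V) (R : I → I → Prop) (ω : I → Bool) (e : Finset V) : Prop :=
  ¬ ∃ l, ed l = e ∧ Win R ω l

/-- the item survives -/
def Sur (R : I → I → Prop) (ω : I → Bool) (j : I) : Prop := ∀ l, R j l → ¬ ω l = true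

variable {k : ℕ} {ed : I → Finset V} {R : I → I → Prop}
    {E : Finset (Finset V)} {p : I → ℝ} {a m τ θ : ℝ}

lemma det1 (h : St k ed R E p a m τ) (hn : Num k a m θ) {e : Finset V} (he : e ∈ E)
    {ω : I → Bool} (hB : ¬ B1 ed R p θ e ω) :
    1 - θ ^ 2 * (k + 1) ^ 2 ≤ ∑ i, (if ed i = e ∧ Sur R ω i then ww R p θ i else 0) := by
  have hk := hn.k1r
  have hpt : ∀ i, (if ed i = e then ww R p θ i else 0)
      - ∑ l, (if ω l then (if ed i = e ∧ R i l then ww R p θ i else 0) else 0)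
      ≤ (if ed i = e ∧ Sur R ω i then ww R p θ i else 0) := by
    intro i
    have hw := ww_nonneg h hn i
    have hterm : ∀ l, 0 ≤ (if ω l then (if ed i = e ∧ R i l then ww R p θ i else 0) else 0) :=
      fun l => ite_nn (ite_nn hw)
    have hs := Finset.sum_nonneg fun l (_ : l ∈ (Finset.univ : Finset I)) => hterm l
    by_cases hi : ed i = e
    · by_cases hS : Sur R ω i
      · rw [if_pos hi, if_pos ⟨hi, hS⟩]; linarith
      · have hS' := hS
        unfold Sur at hS'
        push Not at hS'
        obtain ⟨l, hR, hl⟩ := hS'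
        have := Finset.single_le_sum (fun l (_ : l ∈ (Finset.univ : Finset I)) => hterm l) (Finset.mem_univ l)
        rw [if_pos hl, if_pos ⟨hi, hR⟩] at this
        rw [if_pos hi, if_neg (fun hh => hS hh.2)]; linarith
    · rw [if_neg hi, if_neg (fun hh => hi hh.1)]; linarith
  have hsum := Finset.sum_le_sum fun i (_ : i ∈ (Finset.univ : Finset I)) => hpt i
  rw [Finset.sum_sub_distrib, Finset.sum_comm] at hsum
  have hc : ∑ l, ∑ i, (if ω l then (if ed i = e ∧ R i l then ww R p θ i else 0) else 0)
      = ∑ l, if ω l then c1 ed R p θ e l else 0 := by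
    apply Finset.sum_congr rfl
    intro l _
    by_cases hl : ω l = true
    · simp only [if_pos hl]; rfl
    · simp only [if_neg hl, Finset.sum_const_zero]
  rw [hc] at hsum
  unfold B1 at hB
  push Not at hB
  rw [E_c1] at hB
  have hfin : 1 - θ ^ 2 * k ^ 2 ≤ ∑ i, (if ed i = e then ww R p θ i else 0)
      - ∑ i, (if ed i = e then ww R p θ i * (θ * Kt R p i) else 0) := by
    rw [← Finset.sum_sub_distrib]
    have h1 := h.sum e he
    calc 1 - θ ^ 2 * k ^ 2 = ∑ i, (if ed i = e then p i else 0) * (1 - θ ^ 2 * k ^ 2) := by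
          rw [← Finset.sum_mul, h1, one_mul]
      _ ≤ _ := by
          apply Finset.sum_le_sum
          intro i _
          by_cases hi : ed i = e
          · simp only [if_pos hi]
            unfold ww
            have hp := (h.pos i).le
            have hK0 := Kt_nonneg h i
            have hK := Kt_le h hn i
            have hK2 : Kt R p i ^ 2 ≤ k ^ 2 := by gcongr
            have := mul_le_mul_of_nonneg_left hK2 (mul_nonneg hp (sq_nonneg θ))
            nlinarith
          · simp only [if_neg hi]; simp
  have : θ ^ 2 * (k + 1) ^ 2 = θ ^ 2 * k ^ 2 + θ ^ 2 + 2 * (θ ^ 2 * k) := by ring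
  have : 0 ≤ θ ^ 2 * k := by positivity
  linarith

lemma det2 (h : St k ed R E p a m τ) (hn : Num k a m θ) {i : I} {v : V} (hv : v ∈ ed i)
    {ω : I → Bool} (hB2 : ¬ B2 ed R p θ i v ω) (hB3 : ¬ B3 k ed R p θ i v ω) :
    ∑ j, (if JJ ed R i v j ∧ Unc ed R ω (ed j) ∧ Sur R ω j then ww R p θ j else 0)
      ≤ a - θ * (a * (1 - a)) + 66 * (θ ^ 2 * (k + 1) ^ 2) := by
  have hk := hn.k1r
  have hθ := hn.θ0
  -- pointwise
  have hpt : ∀ j, (if JJ ed R i v j ∧ Unc ed R ω (ed j) ∧ Sur R ω j then ww R p θ j else 0)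
      ≤ (if JJ ed R i v j then ww R p θ j else 0)
        + ∑ l, (if ω l then -(if JJ ed R i v j ∧ Cn ed R v j l then ww R p θ j else 0) else 0)
        + ∑ l, (if (ω l = true ∧ ∃ l', N3 ed R i v (j, l) l' ∧ ω l' = true)
            then w3 ed R p θ i v (j, l) else 0) := by
    intro j
    have hw := ww_nonneg h hn j
    by_cases hJ : JJ ed R i v j
    swap
    · simp only [hJ, false_and, if_false]
      simp [w3, hJ]
    rw [if_pos hJ]
    -- the good set
    set A : I → Prop := fun l => Cn ed R v j l ∧ ω l = true ∧ ¬ ∃ l', N3 ed R i v (j, l) l' ∧ ω l' = true with hA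
    have hcomb : ∑ l, (if A l then ww R p θ j else 0)
        + ∑ l, (if ω l then -(if JJ ed R i v j ∧ Cn ed R v j l then ww R p θ j else 0) else 0)
        + ∑ l, (if (ω l = true ∧ ∃ l', N3 ed R i v (j, l) l' ∧ ω l' = true)
            then w3 ed R p θ i v (j, l) else 0) = 0 := by
      rw [← Finset.sum_add_distrib, ← Finset.sum_add_distrib]
      apply Finset.sum_eq_zero
      intro l _
      simp only [hA, w3]
      by_cases h1 : ω l = true <;> by_cases h2 : Cn ed R v j l <;>
        by_cases h3 : ∃ l', N3 ed R i v (j, l) l' ∧ ω l' = true <;> simp [h1, h2, h3, hJ]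
    have huni : ∀ x y, A x → A y → x = y := by
      intro x y hx hy
      by_contra hne
      exact hx.2.2 ⟨y, ⟨hJ, hx.1, Or.inl ⟨hy.1, fun hh => hne hh.symm⟩⟩, hy.2.1⟩
    by_cases hUS : Unc ed R ω (ed j) ∧ Sur R ω j
    · have hz : ∑ l, (if A l then ww R p θ j else 0) = 0 := by
        apply Finset.sum_eq_zero
        intro l _
        rw [if_neg]
        rintro ⟨hC, hl, hno⟩
        rcases hC with hed | ⟨hR, -⟩
        · apply hUS.1
          refine ⟨l, hed, hl, fun l' hR hl' => hno ⟨l', ⟨hJ, Or.inl hed, Or.inr ⟨hed, hR⟩⟩, hl'⟩⟩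
        · exact hUS.2 l hR hl
      rw [if_pos ⟨hJ, hUS⟩]
      linarith
    · have hz := sum_ite_le_of_uniq A (fun _ => ww R p θ j) (ww R p θ j) hw (fun _ => le_rfl) huni
      rw [if_neg (fun hh => hUS hh.2)]
      linarith
  have hsum := Finset.sum_le_sum fun i (_ : i ∈ (Finset.univ : Finset I)) => hpt i
  rw [Finset.sum_add_distrib, Finset.sum_add_distrib] at hsum
  rw [Finset.sum_comm (f := fun j l => (if ω l then -(if JJ ed R i v j ∧ Cn ed R v j l then ww R p θ j else 0) else 0))] at hsum
  have hc : ∑ l, ∑ j, (if ω l then -(if JJ ed R i v j ∧ Cn ed R v j l then ww R p θ j else 0) else 0)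
      = ∑ l, if ω l then -(d2 ed R p θ i v l) else 0 := by
    apply Finset.sum_congr rfl
    intro l _
    by_cases hl : ω l = true
    · simp only [if_pos hl, Finset.sum_neg_distrib]; rfl
    · simp only [if_neg hl, Finset.sum_const_zero]
  rw [hc] at hsum
  unfold B2 at hB2
  unfold B3 at hB3
  push Not at hB2 hB3
  rw [Fintype.sum_prod_type] at hB3
  have hE : ∑ l, θ * p l * (-(d2 ed R p θ i v l)) = - ∑ l, θ * p l * d2 ed R p θ i v l := by
    rw [← Finset.sum_neg_distrib]; exact Finset.sum_congr rfl fun l _ => by ring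
  rw [hE, E_d2 h] at hB2
  have hmain : ∑ j, (if JJ ed R i v j then ww R p θ j else 0) -
      ∑ j, (if JJ ed R i v j then ww R p θ j *
      (θ * (1 + ∑ l, (if R j l ∧ v ∉ ed l then p l else 0))) else 0) ≤ a - θ * (a * (1 - a)) := by
    rw [← Finset.sum_sub_distrib]
    have hf : 0 ≤ 1 - θ * (1 - a) := by nlinarith [hn.θ1, hn.a0, hn.a1]
    calc _ ≤ ∑ j, (if R i j ∧ v ∈ ed j then p j else 0) * (1 - θ * (1 - a)) := by
          apply Finset.sum_le_sum
          intro j _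
          by_cases hJ : JJ ed R i v j
          · rw [if_pos hJ, if_pos hJ, if_pos (show R i j ∧ v ∈ ed j from hJ)]
            set Ko := ∑ l, (if R j l ∧ v ∉ ed l then p l else 0) with hKo
            have hKo0 : 0 ≤ Ko := Finset.sum_nonneg fun l _ => ite_nn (h.pos l).le
            set κ := ∑ l, (if R j l ∧ v ∈ ed l then p l else 0) with hκ
            have hκ0 : 0 ≤ κ := Finset.sum_nonneg fun l _ => ite_nn (h.pos l).le
            have hκa : κ ≤ a := h.kap j v hJ.2
            have hK : Kt R p j = κ + Ko := by
              rw [hκ, hKo, ← Finset.sum_add_distrib]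
              apply Finset.sum_congr rfl
              intro l _
              by_cases h1 : R j l <;> by_cases h2 : v ∈ ed l <;> simp [h1, h2]
            unfold ww
            rw [hK]
            have hp := (h.pos j).le
            have : (1 + θ * (κ + Ko)) - (1 + θ * (κ + Ko)) * (θ * (1 + Ko)) ≤ 1 - θ * (1 - a) := by
              have e1 : 0 ≤ θ * (κ + Ko) * (θ * (1 + Ko)) := by positivity
              have e2 := mul_le_mul_of_nonneg_left hκa hθ.le
              nlinarith
            have := mul_le_mul_of_nonneg_left this hp
            linarith
          · rw [if_neg hJ, if_neg hJ, if_neg (show ¬ (R i j ∧ v ∈ ed j) from hJ)]; simp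
      _ ≤ a * (1 - θ * (1 - a)) := by
          rw [← Finset.sum_mul]
          exact mul_le_mul_of_nonneg_right (h.kap i v hv) hf
      _ = _ := by ring
  have h1k : 0 ≤ θ ^ 2 * k := by positivity
  have h1k2 : 0 ≤ θ ^ 2 * k ^ 2 := by positivity
  have e2 : θ ^ 2 * (k + 1) ^ 2 = θ ^ 2 * k ^ 2 + θ ^ 2 + 2 * (θ ^ 2 * k) := by ring
  nlinarith

/-! local lemma -/

def Ad (ed : I → Finset V) (R : I → I → Prop) (e f : Finset V) : Prop :=
  e = f ∨ ∃ i j, ed i = e ∧ ed j = f ∧ R i j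

def TT (ed : I → Finset V) (R : I → I → Prop) (e : Finset V) : Set I :=
  {l | ∃ f, Ad ed R e f ∧ Ad ed R f (ed l)}

def Bad (k : ℕ) (ed : I → Finset V) (R : I → I → Prop) (p : I → ℝ) (θ : ℝ) (e : Finset V) (ω : I → Bool) : Prop :=
  B1 ed R p θ e ω ∨ ∃ i ∈ Finset.univ.filter (fun i => ed i = e), ∃ v ∈ ed i,
    (B2 ed R p θ i v ω ∨ B3 k ed R p θ i v ω)

lemma Ad_symm (h : St k ed R E p a m τ) {e f : Finset V} (hA : Ad ed R e f) : Ad ed R f e := by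
  rcases hA with hA | ⟨i, j, hi, hj, hR⟩
  · exact Or.inl hA.symm
  · exact Or.inr ⟨j, i, hj, hi, h.symm _ _ hR⟩

lemma Ad_mem (h : St k ed R E p a m τ) {e f : Finset V} (he : e ∈ E) (hA : Ad ed R e f) : f ∈ E := by
  rcases hA with hA | ⟨i, j, hi, hj, hR⟩
  · exact hA ▸ he
  · exact hj ▸ h.memE j

lemma card_items (h : St k ed R E p a m τ) {e : Finset V} (he : e ∈ E) :
    ((Finset.univ.filter (fun i => ed i = e)).card : ℝ) * τ ≤ 1 := by
  rw [← h.sum e he, ← Finset.sum_filter, ← nsmul_eq_mul]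
  exact Finset.card_nsmul_le_sum _ _ _ fun i _ => h.lo i

lemma card_nbr (h : St k ed R E p a m τ) (hn : Num k a m θ) (i : I) :
    ((Finset.univ.filter (fun j => R i j)).card : ℝ) * τ ≤ k := by
  refine le_trans ?_ (Kt_le h hn i)
  unfold Kt
  rw [← Finset.sum_filter, ← nsmul_eq_mul]
  exact Finset.card_nsmul_le_sum _ _ _ fun i _ => h.lo i

lemma card_Ad (h : St k ed R E p a m τ) (hn : Num k a m θ) (hτ : τ ≤ 1) {e : Finset V} (he : e ∈ E) :
    ((E.filter (Ad ed R e)).card : ℝ) ≤ (k + 1) / τ ^ 2 := by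
  have hτ0 := h.τpos
  have hsub : E.filter (Ad ed R e) ⊆ insert e
      ((Finset.univ.filter (fun i => ed i = e)).biUnion fun i => (Finset.univ.filter (fun j => R i j)).image ed) := by
    intro f hf
    obtain ⟨-, hA⟩ := Finset.mem_filter.1 hf
    rcases hA with hA | ⟨i, j, hi, hj, hR⟩
    · exact Finset.mem_insert.2 (Or.inl hA.symm)
    · refine Finset.mem_insert.2 (Or.inr (Finset.mem_biUnion.2 ⟨i, by simp [hi], Finset.mem_image.2 ⟨j, by simp [hR], hj⟩⟩))
  have h1 := (Finset.card_le_card hsub).trans (Finset.card_insert_le _ _)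
  have h2 : (((Finset.univ.filter (fun i => ed i = e)).biUnion
      fun i => (Finset.univ.filter (fun j => R i j)).image ed).card : ℝ) ≤ k / τ ^ 2 := by
    calc _ ≤ ((∑ i ∈ Finset.univ.filter (fun i => ed i = e), ((Finset.univ.filter (fun j => R i j)).image ed).card : ℕ) : ℝ) := by
          exact_mod_cast Finset.card_biUnion_le
      _ ≤ ∑ i ∈ Finset.univ.filter (fun i => ed i = e), (k / τ : ℝ) := by
          push_cast
          apply Finset.sum_le_sum
          intro i _
          have : (((Finset.univ.filter (fun j => R i j)).image ed).card : ℝ) ≤ (Finset.univ.filter (fun j => R i j)).card := by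
            exact_mod_cast Finset.card_image_le
          refine this.trans ?_
          rw [le_div_iff₀ hτ0]
          exact card_nbr h hn i
      _ = ((Finset.univ.filter (fun i => ed i = e)).card : ℝ) * τ * (k / τ ^ 2) := by
          rw [Finset.sum_const, nsmul_eq_mul]; field_simp
      _ ≤ _ := by
          have := mul_le_mul_of_nonneg_right (card_items h he) (show (0:ℝ) ≤ k / τ ^ 2 by positivity)
          linarith
  have h3 : (1 : ℝ) ≤ 1 / τ ^ 2 := by
    rw [le_div_iff₀ (by positivity)]; nlinarith
  have h1' : ((E.filter (Ad ed R e)).card : ℝ) ≤ (((Finset.univ.filter (fun i => ed i = e)).biUnion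
      fun i => (Finset.univ.filter (fun j => R i j)).image ed).card : ℝ) + 1 := by exact_mod_cast h1
  rw [add_div]
  linarith

lemma card_bi {H : Type} [DecidableEq H] (S E : Finset H) (A : H → Finset H) (D x : ℝ) (hS : S ⊆ E)
    (hA : ∀ e ∈ E, ((A e).card : ℝ) ≤ D) (hD : 0 ≤ D) (hx : (S.card : ℝ) ≤ x) : ((S.biUnion A).card : ℝ) ≤ x * D := by
  calc _ ≤ ((∑ i ∈ S, (A i).card : ℕ) : ℝ) := by exact_mod_cast Finset.card_biUnion_le
    _ ≤ ∑ i ∈ S, D := by push_cast; exact Finset.sum_le_sum fun i hi => hA i (hS hi)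
    _ = S.card * D := by simp
    _ ≤ _ := mul_le_mul_of_nonneg_right hx hD

lemma sum_loc {X : Type} [Fintype X] (P Q : X → Prop) [DecidablePred P] [DecidablePred Q] (f : X → ℝ) (hPQ : ∀ x, f x ≠ 0 → (P x ↔ Q x)) :
    ∑ x, (if P x then f x else 0) = ∑ x, (if Q x then f x else 0) := by
  apply Finset.sum_congr rfl
  intro x _
  by_cases hf : f x = 0
  · simp [hf]
  · exact if_congr (hPQ x hf) rfl rfl

lemma Bad_loc (e : Finset V) (ω ω' : I → Bool) (hω : ∀ l ∈ TT ed R e, ω l = ω' l)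
    (hB : Bad k ed R p θ e ω) : Bad k ed R p θ e ω' := by
  rcases hB with hB | ⟨i, hi, v, hv, hB⟩
  · left
    unfold B1 at *
    refine hB.trans (le_of_eq ?_)
    apply Finset.sum_congr rfl
    intro l _
    by_cases hf : c1 ed R p θ e l = 0
    · simp [hf]
    · obtain ⟨i, -, hne⟩ := Finset.exists_ne_zero_of_sum_ne_zero hf
      have hc : ed i = e ∧ R i l := by by_contra hc; exact hne (if_neg hc)
      rw [hω l ⟨ed l, Or.inr ⟨i, l, hc.1, rfl, hc.2⟩, Or.inl rfl⟩]
  · have hie : ed i = e := (Finset.mem_filter.1 hi).2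
    have key : ∀ j l, JJ ed R i v j → Cn ed R v j l → ω l = ω' l := by
      intro j l hJ hC
      apply hω
      refine ⟨ed j, Or.inr ⟨i, j, hie, rfl, hJ.1⟩, ?_⟩
      rcases hC with hC | hC
      · exact Or.inl hC.symm
      · exact Or.inr ⟨j, l, rfl, rfl, hC.1⟩
    have key2 : ∀ x l, N3 ed R i v x l → ω l = ω' l := by
      rintro ⟨j, x⟩ l ⟨hJ, hC, hor⟩
      rcases hor with hor | ⟨h1, h2⟩
      · exact key j l hJ hor.1
      · apply hω
        exact ⟨ed j, Or.inr ⟨i, j, hie, rfl, hJ.1⟩, Or.inr ⟨x, l, h1, rfl, h2⟩⟩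
    right
    refine ⟨i, hi, v, hv, ?_⟩
    rcases hB with hB | hB
    · left
      unfold B2 at *
      refine hB.trans (le_of_eq ?_)
      apply Finset.sum_congr rfl
      intro l _
      by_cases hf : d2 ed R p θ i v l = 0
      · simp [hf]
      · obtain ⟨j, -, hne⟩ := Finset.exists_ne_zero_of_sum_ne_zero hf
        have hc : JJ ed R i v j ∧ Cn ed R v j l := by by_contra hc; exact hne (if_neg hc)
        rw [key j l hc.1 hc.2]
    · right
      unfold B3 at *
      refine hB.trans (le_of_eq ?_)
      apply sum_loc
      intro x hx
      have hc : JJ ed R i v x.1 ∧ Cn ed R v x.1 x.2 := by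
        by_contra hc; exact hx (by unfold w3; exact if_neg hc)
      rw [key x.1 x.2 hc.1 hc.2]
      apply and_congr Iff.rfl
      constructor
      · rintro ⟨l, h1, h2⟩; exact ⟨l, h1, (key2 x l h1) ▸ h2⟩
      · rintro ⟨l, h1, h2⟩; exact ⟨l, h1, (key2 x l h1).symm ▸ h2⟩

lemma Pr_Bad (h : St k ed R E p a m τ) (hn : Num k a m θ) (hτ : τ ≤ 1) {e : Finset V} (he : e ∈ E) :
    Pr (fun l => θ * p l) (Bad k ed R p θ e) ≤
      (2 * k + 1) / τ * Real.exp (-(θ ^ 3 / (64 * (k + 1) ^ 2 * m))) := by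
  set ρ := Real.exp (-(θ ^ 3 / (64 * (k + 1) ^ 2 * m))) with hρ
  have hρ0 : 0 < ρ := Real.exp_pos _
  have hτ0 := h.τpos
  have h0 := pi0 h hn
  have h1 := pi1 h hn
  have h2 : Pr (fun l => θ * p l) (fun ω => ∃ i ∈ Finset.univ.filter (fun i => ed i = e), ∃ v ∈ ed i,
    (B2 ed R p θ i v ω ∨ B3 k ed R p θ i v ω)) ≤ 2 * k / τ * ρ := by
    refine (Pr_exists h0 h1 _ (fun i ω => ∃ v ∈ ed i, (B2 ed R p θ i v ω ∨ B3 k ed R p θ i v ω))).trans ?_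
    calc _ ≤ ∑ i ∈ Finset.univ.filter (fun i => ed i = e), (2 * k * ρ) := by
          apply Finset.sum_le_sum
          intro i _
          refine (Pr_exists h0 h1 _ (fun v ω => (B2 ed R p θ i v ω ∨ B3 k ed R p θ i v ω))).trans ?_
          calc _ ≤ ∑ v ∈ ed i, 2 * ρ := by
                apply Finset.sum_le_sum
                intro v hv
                refine (Pr_or h0 h1 _ _).trans ?_
                have := Pr_B2 h hn i v hv
                have := Pr_B3 h hn i v hv
                linarith
            _ = (ed i).card * (2 * ρ) := by simp
            _ ≤ k * (2 * ρ) := mul_le_mul_of_nonneg_right (by exact_mod_cast h.card i) (by linarith)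
            _ = _ := by ring
      _ = ((Finset.univ.filter (fun i => ed i = e)).card : ℝ) * τ * (2 * k / τ * ρ) := by
          rw [Finset.sum_const, nsmul_eq_mul]; field_simp
      _ ≤ 1 * (2 * k / τ * ρ) := mul_le_mul_of_nonneg_right (card_items h he) (by positivity)
      _ = _ := one_mul _
  refine (Pr_or h0 h1 _ _).trans ?_
  have h3 := Pr_B1 h hn e he
  have h4 : ρ ≤ 1 / τ * ρ := by
    have : 1 ≤ 1 / τ := by rw [le_div_iff₀ hτ0]; linarith
    nlinarith
  have : (2 * k + 1) / τ * ρ = 2 * k / τ * ρ + 1 / τ * ρ := by ring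
  rw [this]
  linarith

lemma exists_good (h : St k ed R E p a m τ) (hn : Num k a m θ) (hτ : τ ≤ 1)
    (hcond : 8 * (k + 1) ^ 5 * Real.exp (-(θ ^ 3 / (64 * (k + 1) ^ 2 * m))) ≤ τ ^ 9) :
    ∃ ω : I → Bool, ∀ e ∈ E, ¬ Bad k ed R p θ e ω := by
  set ρ := Real.exp (-(θ ^ 3 / (64 * (k + 1) ^ 2 * m))) with hρ
  have hρ0 : 0 < ρ := Real.exp_pos _
  have hτ0 := h.τpos
  have hk := hn.k1r
  set A : Finset V → Finset (Finset V) := fun e => E.filter (Ad ed R e) with hA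
  set D : ℝ := (k + 1) / τ ^ 2 with hD
  have hD1 : 1 ≤ D := by
    rw [hD, le_div_iff₀ (by positivity)]; nlinarith
  have hAc : ∀ e ∈ E, ((A e).card : ℝ) ≤ D := fun e he => card_Ad h hn hτ he
  have hAE : ∀ e, A e ⊆ E := fun e => Finset.filter_subset _ _
  have hbi : ∀ S : Finset (Finset V), S.biUnion A ⊆ E := fun S => Finset.biUnion_subset.2 fun e _ => hAE e
  apply exists_of_Pr_pos
  apply LLL (pi0 h hn) (pi1 h hn) E (Bad k ed R p θ) (TT ed R) (fun e _ ω ω' => Bad_loc e ω ω')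
    (fun e => (((A e).biUnion A).biUnion A).biUnion A) ?_ ((2 * k + 1) / τ * ρ) (D * D * D * D)
    (by positivity) ?_ ?_ (fun e he => Pr_Bad h hn hτ he) ?_
  · intro e he e' he' hne
    rw [Set.disjoint_left]
    rintro l ⟨f, hf1, hf2⟩ ⟨g, hg1, hg2⟩
    apply hne
    have hf := Ad_mem h he hf1
    have hg := Ad_mem h he' hg1
    refine Finset.mem_biUnion.2 ⟨g, Finset.mem_biUnion.2 ⟨ed l, Finset.mem_biUnion.2 ⟨f, ?_, ?_⟩, ?_⟩, ?_⟩
    · exact Finset.mem_filter.2 ⟨hf, hf1⟩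
    · exact Finset.mem_filter.2 ⟨h.memE l, hf2⟩
    · exact Finset.mem_filter.2 ⟨hg, Ad_symm h hg2⟩
    · exact Finset.mem_filter.2 ⟨he', Ad_symm h hg1⟩
  · have : 1 ≤ D * D := by nlinarith
    nlinarith
  · intro e he
    have hD0 : 0 ≤ D := by linarith
    exact card_bi _ E A D _ (hbi _) hAc hD0 (card_bi _ E A D _ (hbi _) hAc hD0
      (card_bi _ E A D _ (hAE e) hAc hD0 (hAc e he)))
  · have e1 : 4 * ((2 * k + 1) / τ * ρ) * (D * D * D * D) = 4 * (2 * k + 1) * (k + 1) ^ 4 * ρ / τ ^ 9 := by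
      rw [hD]; field_simp
    rw [e1, div_le_one (by positivity)]
    refine le_trans ?_ hcond
    have : 4 * (2 * (k:ℝ) + 1) ≤ 8 * (k + 1) := by linarith
    have h2 := mul_le_mul_of_nonneg_right this (show 0 ≤ ((k:ℝ) + 1) ^ 4 * ρ by positivity)
    calc _ = 4 * (2 * (k:ℝ) + 1) * (((k:ℝ) + 1) ^ 4 * ρ) := by ring
      _ ≤ _ := h2
      _ = _ := by ring

end Det
end Nib

namespace Nib

section Iter
open Finset
open scoped Classical

lemma sum_sub {X : Type} [Fintype X] (P : X → Prop) [DecidablePred P] [Fintype {x // P x}] (f : X → ℝ) :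
    ∑ x : {x // P x}, f x = ∑ x, (if P x then f x else 0) := by
  rw [← Finset.sum_filter]
  exact (Finset.sum_subtype _ (by simp) f).symm

variable {V I : Type} [Fintype I] {k : ℕ} {ed : I → Finset V} {R : I → I → Prop}
    {E : Finset (Finset V)} {p : I → ℝ} {a m τ θ : ℝ}

/-- surviving weight of a list -/
noncomputable def sv (ed : I → Finset V) (R : I → I → Prop) (p : I → ℝ) (θ : ℝ) (ω : I → Bool)
    (e : Finset V) : ℝ := ∑ i, (if ed i = e ∧ Sur R ω i then ww R p θ i else 0)

lemma step (h : St k ed R E p a m τ) (hn : Num k a m θ) (hτ : τ ≤ 1)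
    (hcond : 8 * (k + 1) ^ 5 * Real.exp (-(θ ^ 3 / (64 * (k + 1) ^ 2 * m))) ≤ τ ^ 9)
    {d : ℝ} (hd0 : 0 ≤ d) (hd : d + 67 * (θ ^ 2 * (k + 1) ^ 2) ≤ θ * (a * (1 - a))) :
    ∃ ω : I → Bool, St k (fun x : {i // Unc ed R ω (ed i) ∧ Sur R ω i} => ed x.1)
      (fun x y => R x.1 y.1) (E.filter (Unc ed R ω)) (fun x => ww R p θ x.1 / sv ed R p θ ω (ed x.1))
      (a - d) (4 * m) (τ / 2) := by
  obtain ⟨ω, hω⟩ := exists_good h hn hτ hcond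
  refine ⟨ω, ?_⟩
  have hθ := hn.θ0
  set u : ℝ := θ ^ 2 * (k + 1) ^ 2 with hu
  have hu0 : 0 ≤ u := by positivity
  have hu1 : u ≤ 1 / 4 := by
    have : u = (θ * (k + 1)) ^ 2 := by rw [hu]; ring
    rw [this]
    have h0 : 0 ≤ θ * ((k:ℝ) + 1) := by positivity
    nlinarith [hn.θk]
  have hs1 : ∀ e ∈ E, 1 - u ≤ sv ed R p θ ω e := fun e he =>
    det1 h hn he (fun hB => hω e he (Or.inl hB))
  have hs2 : ∀ e ∈ E, sv ed R p θ ω e ≤ 2 := by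
    intro e he
    have := h.sum e he
    calc sv ed R p θ ω e ≤ ∑ i, 2 * (if ed i = e then p i else 0) := by
          apply Finset.sum_le_sum
          intro i _
          by_cases hi : ed i = e
          · rw [if_pos hi]
            have := ww_le h hn i
            have := h.pos i
            by_cases hS : Sur R ω i
            · rw [if_pos ⟨hi, hS⟩]; linarith
            · rw [if_neg (fun hh => hS hh.2)]; linarith
          · rw [if_neg hi, if_neg (fun hh => hi hh.1)]; simp
      _ = 2 := by rw [← Finset.mul_sum, this, mul_one]
  have hk2 : ∀ i, ∀ v ∈ ed i, ∑ j, (if JJ ed R i v j ∧ Unc ed R ω (ed j) ∧ Sur R ω j then ww R p θ j else 0)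
      ≤ a - θ * (a * (1 - a)) + 66 * u := by
    intro i v hv
    have hb := hω (ed i) (h.memE i)
    have hb' : ¬ (B2 ed R p θ i v ω ∨ B3 k ed R p θ i v ω) := fun hB =>
      hb (Or.inr ⟨i, by simp, v, hv, hB⟩)
    exact det2 h hn hv (fun hB => hb' (Or.inl hB)) (fun hB => hb' (Or.inr hB))
  have hspos : ∀ i, 0 < sv ed R p θ ω (ed i) := fun i => by
    have := hs1 _ (h.memE i); linarith
  refine ⟨fun i j => h.symm _ _, fun i j => h.ne _ _, fun i j => h.meet _ _,
    fun i j j' h1 h2 h3 => Subtype.ext (h.uniq _ _ _ h1 h2 h3), fun i j => h.lin _ _, fun i => h.card _,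
    fun i => Finset.mem_filter.2 ⟨h.memE _, i.2.1⟩, by linarith [h.τpos], ?_, ?_, ?_, ?_⟩
  · intro i
    rw [le_div_iff₀ (hspos _)]
    have := hs2 _ (h.memE i.1)
    have := mul_le_mul_of_nonneg_left this (show 0 ≤ τ / 2 by linarith [h.τpos])
    linarith [h.lo i.1, le_ww h hn i.1]
  · intro i
    rw [div_le_iff₀ (hspos _)]
    have := hs1 _ (h.memE i.1)
    have := mul_le_mul_of_nonneg_left (show 1 / 2 ≤ sv ed R p θ ω (ed i.1) by linarith) (show 0 ≤ 4 * m by linarith [hn.m0])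
    linarith [ww_le_m h hn i.1]
  · intro e he
    obtain ⟨heE, heU⟩ := Finset.mem_filter.1 he
    have hse : 0 < sv ed R p θ ω e := by have := hs1 e heE; linarith
    rw [sum_sub (fun i => Unc ed R ω (ed i) ∧ Sur R ω i)
      (fun i => if ed i = e then ww R p θ i / sv ed R p θ ω (ed i) else 0)]
    calc _ = ∑ i, (if ed i = e ∧ Sur R ω i then ww R p θ i else 0) / sv ed R p θ ω e := by
          apply Finset.sum_congr rfl
          intro i _
          by_cases hi : ed i = e
          · have : Unc ed R ω (ed i) := hi ▸ heU
            by_cases hS : Sur R ω i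
            · rw [if_pos ⟨this, hS⟩, if_pos hi, if_pos ⟨hi, hS⟩, hi]
            · rw [if_neg (fun hh => hS hh.2), if_neg (fun hh => hS hh.2)]; simp
          · simp [hi]
      _ = 1 := by rw [← Finset.sum_div]; exact div_self hse.ne'
  · intro i v hv
    rw [sum_sub (fun i => Unc ed R ω (ed i) ∧ Sur R ω i)
      (fun j => if R i.1 j ∧ v ∈ ed j then ww R p θ j / sv ed R p θ ω (ed j) else 0)]
    calc _ ≤ ∑ j, (if JJ ed R i.1 v j ∧ Unc ed R ω (ed j) ∧ Sur R ω j then ww R p θ j else 0) / (1 - u) := by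
          apply Finset.sum_le_sum
          intro j _
          by_cases hP : Unc ed R ω (ed j) ∧ Sur R ω j
          · rw [if_pos hP]
            by_cases hJ : R i.1 j ∧ v ∈ ed j
            · rw [if_pos hJ, if_pos ⟨hJ, hP⟩]
              exact div_le_div_of_nonneg_left (ww_nonneg h hn j) (by linarith) (hs1 _ (h.memE j))
            · rw [if_neg hJ, if_neg (fun hh => hJ hh.1)]; simp
          · rw [if_neg hP, if_neg (fun hh => hP hh.2)]; simp
      _ ≤ _ := by
          rw [← Finset.sum_div, div_le_iff₀ (by linarith)]
          have := hk2 i.1 v hv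
          nlinarith [mul_nonneg hd0 hu0, mul_nonneg hn.a0 hu0, mul_le_mul_of_nonneg_right hn.a1 hu0]

lemma iterate {k : ℕ} {θ d ε' : ℝ} (hk : 1 ≤ k) (hθ0 : 0 < θ) (hθk : θ * (k + 1) ≤ 1 / 2)
    (hd0 : 0 ≤ d) (hd1 : d ≤ 1 / (4 * k)) (hε : 0 ≤ ε')
    (hd : d + 67 * (θ ^ 2 * (k + 1) ^ 2) ≤ θ * (1 / (4 * k) * ε')) {V : Type} (N : ℕ) :
    ∀ {I : Type} [Fintype I] {ed : I → Finset V} {R : I → I → Prop}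
    {E : Finset (Finset V)} {p : I → ℝ} {a m τ : ℝ}, St k ed R E p a m τ → 0 ≤ a → 0 < m → τ ≤ 1 →
    a ≤ 1 - ε' → a ≤ 1 / (4 * k) + N * d →
    8 * (k + 1) ^ 5 * Real.exp (-(θ ^ 3 / (64 * (k + 1) ^ 2 * (4 ^ N * m)))) ≤ (τ / 2 ^ N) ^ 9 →
    ∃ C : Set I, (∀ e ∈ E, ∃ i ∈ C, ed i = e) ∧ ∀ i ∈ C, ∀ j ∈ C, ¬ R i j := by
  have hkr : (1:ℝ) ≤ k := by exact_mod_cast hk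
  have hfin : ∀ {a : ℝ}, a ≤ 1 / (4 * k) → 4 * k * a ≤ 1 := by
    intro a ha
    rw [le_div_iff₀ (by linarith)] at ha
    linarith
  induction N with
  | zero =>
    intro I _ ed R E p a m τ h ha0 hm hτ ha1 haN hc
    exact finish h ha0 (hfin (by simpa using haN))
  | succ N ih =>
    intro I _ ed R E p a m τ h ha0 hm hτ ha1 haN hc
    by_cases hsm : a ≤ 1 / (4 * k)
    · exact finish h ha0 (hfin hsm)
    push Not at hsm
    have hn : Num k a m θ := ⟨ha0, by linarith, hk, hθ0, hθk, hm⟩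
    have hτ0 := h.τpos
    have hc1 : 8 * (k + 1) ^ 5 * Real.exp (-(θ ^ 3 / (64 * (k + 1) ^ 2 * m))) ≤ τ ^ 9 := by
      calc _ ≤ 8 * (k + 1) ^ 5 * Real.exp (-(θ ^ 3 / (64 * (k + 1) ^ 2 * (4 ^ (N + 1) * m)))) := by
            apply mul_le_mul_of_nonneg_left _ (by positivity)
            apply Real.exp_le_exp.2
            apply neg_le_neg
            apply div_le_div_of_nonneg_left (by positivity) (by positivity)
            apply mul_le_mul_of_nonneg_left _ (by positivity)
            have : (1:ℝ) ≤ 4 ^ (N + 1) := one_le_pow₀ (by norm_num)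
            nlinarith
        _ ≤ _ := hc
        _ ≤ _ := by
            apply pow_le_pow_left₀ (by positivity)
            exact div_le_self hτ0.le (one_le_pow₀ (by norm_num))
    have haa : 1 / (4 * k) * ε' ≤ a * (1 - a) := by
      have : 0 < 1 / (4 * (k:ℝ)) := by positivity
      exact mul_le_mul hsm.le (by linarith) hε ha0
    have hd' : d + 67 * (θ ^ 2 * (k + 1) ^ 2) ≤ θ * (a * (1 - a)) :=
      hd.trans (mul_le_mul_of_nonneg_left haa hθ0.le)
    obtain ⟨ω, hst⟩ := step h hn hτ hc1 hd0 hd'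
    push_cast at haN
    have e1 : (4:ℝ) ^ N * (4 * m) = 4 ^ (N + 1) * m := by ring
    have e2 : τ / 2 / 2 ^ N = τ / 2 ^ (N + 1) := by rw [pow_succ]; field_simp
    obtain ⟨C, hC1, hC2⟩ := ih hst (by linarith) (by linarith) (by linarith) (by linarith) (by linarith)
      (by rw [e1, e2]; exact hc)
    refine ⟨{l | Win R ω l} ∪ Subtype.val '' C, ?_, ?_⟩
    · intro e he
      by_cases hU : Unc ed R ω e
      · obtain ⟨i, hi, hie⟩ := hC1 e (Finset.mem_filter.2 ⟨he, hU⟩)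
        exact ⟨i.1, Or.inr ⟨i, hi, rfl⟩, hie⟩
      · unfold Unc at hU
        push Not at hU
        obtain ⟨l, hl, hw⟩ := hU
        exact ⟨l, Or.inl hw, hl⟩
    · rintro i (hi | ⟨i, hi, rfl⟩) j (hj | ⟨j, hj, rfl⟩) hR
      · exact hi.2 j hR hj.1
      · exact j.2.2 i (h.symm _ _ hR) hi.1
      · exact i.2.2 j hR hj.1
      · exact hC2 i hi j hj hR

end Iter
end Nib

namespace Nib

section Final
open Finset

lemma evt (c C K : ℝ) (hc : 0 < c) (hC : 0 < C) (hK : 0 < K) :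
    ∀ᶠ x : ℝ in Filter.atTop, C * Real.exp (-(c * x)) ≤
      (Real.exp (-(x ^ ((1:ℝ) / 20))) / x / K) ^ 9 := by
  have h2 := Real.isLittleO_log_id_atTop
  have h1' := (tendsto_rpow_neg_atTop (show (0:ℝ) < 19 / 20 by norm_num)).eventually
    (eventually_le_nhds (show (0:ℝ) < c / 36 by positivity))
  have h2' := h2.bound (show (0:ℝ) < c / 36 by positivity)
  filter_upwards [h1', h2', Filter.eventually_ge_atTop (1:ℝ),
    Filter.eventually_ge_atTop ((Real.log C + 9 * Real.log K) / (c / 4))] with x a1 a2 a3 a4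
  have hx0 : 0 < x := by linarith
  have a1' : x ^ ((1:ℝ) / 20) ≤ c / 36 * x := by
    have e : x ^ ((1:ℝ) / 20) = x ^ (-(19 / 20) : ℝ) * x := by
      nth_rewrite 3 [← Real.rpow_one x]
      rw [← Real.rpow_add hx0]; norm_num
    rw [e]
    exact mul_le_mul_of_nonneg_right a1 hx0.le
  rw [id, Real.norm_of_nonneg hx0.le, Real.norm_of_nonneg (Real.log_nonneg a3)] at a2
  rw [div_le_iff₀ (by positivity)] at a4
  have e1 : C * Real.exp (-(c * x)) = Real.exp (Real.log C - c * x) := by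
    rw [Real.exp_sub, Real.exp_log hC, Real.exp_neg]; rfl
  have e2 : (Real.exp (-(x ^ ((1:ℝ) / 20))) / x / K) ^ 9
      = Real.exp (9 * (-(x ^ ((1:ℝ) / 20)) - Real.log x - Real.log K)) := by
    rw [show (9:ℝ) = ((9:ℕ):ℝ) by norm_num, Real.exp_nat_mul, Real.exp_sub, Real.exp_sub,
      Real.exp_log hx0, Real.exp_log hK]
  rw [e1, e2]
  apply Real.exp_le_exp.2
  nlinarith

/-- The main colouring result: the whole hypergraph can be coloured. -/
lemma full_col (ε : ℝ) (k : ℕ) (hε : 0 < ε) (hε1 : ε ≤ 1 / 4) (hk : 1 ≤ k) :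
    ∃ δ : ℕ, 3 ≤ δ ∧ ∀ (V : Type) [DecidableEq V]
      (E : Finset (Finset V)) (σ : Finset V → Finset V → ℕ ≃ ℕ)
      (L : Finset V → Finset ℕ) (μ : Finset V → ℕ → ℝ) (ℓ n : ℝ),
      (∀ e ∈ E, e.card = k) →
      (∀ e ∈ E, ∀ f ∈ E, e ≠ f → (e ∩ f).card ≤ 1) →
      IsEdgeCorrespondence E σ →
      (δ : ℝ) < ℓ → 0 < n →
      (∀ e ∈ E, ∀ c ∈ L e, Real.exp (-(n ^ ((1 : ℝ) / 20))) ≤ μ e c ∧ μ e c ≤ 1) →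
      1 + ε < ℓ / n →
      (∀ e ∈ E, ∑ c ∈ L e, μ e c = ℓ) →
      (∀ e ∈ E, ∀ v ∈ e, ∀ c : ℕ, NWeight E L μ σ e v c ≤ n) →
      ∃ γ : Finset V → ℕ, IsLσColouring E L σ γ := by
  have hkr : (1:ℝ) ≤ k := by exact_mod_cast hk
  set β : ℝ := 1 / (4 * k) * (ε / 2) with hβ
  have hβ0 : 0 < β := by positivity
  have hq : (0:ℝ) < 1 / (4 * k) := by positivity
  have hq1 : 1 / (4 * (k:ℝ)) ≤ 1 / 4 := by
    apply one_div_le_one_div_of_le <;> linarith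
  have hββ : β ≤ 1 / (4 * k) := by rw [hβ]; nlinarith
  set θ : ℝ := β / (134 * (k + 1) ^ 2) with hθ
  have hθ0 : 0 < θ := by positivity
  have hθe : θ * (134 * (k + 1) ^ 2) = β := by rw [hθ]; field_simp
  set d : ℝ := θ * β / 2 with hd
  have hd0 : 0 < d := by positivity
  have hθ1 : θ * (k + 1) ≤ 1 / 2 := by nlinarith
  have hθ2 : θ ≤ 1 / 2 := by nlinarith
  have hd1 : d ≤ 1 / (4 * k) := by rw [hd]; nlinarith
  have hdd : d + 67 * (θ ^ 2 * (k + 1) ^ 2) ≤ θ * (1 / (4 * k) * (ε / 2)) := by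
    rw [← hβ, hd]
    have : 67 * (θ ^ 2 * (k + 1) ^ 2) = θ * (θ * (134 * (k + 1) ^ 2)) / 2 := by ring
    rw [this, hθe]; linarith
  set N : ℕ := ⌈1 / d⌉₊ with hN
  have hNd : 1 ≤ N * d := by
    have := Nat.le_ceil (1 / d)
    rwa [div_le_iff₀ hd0] at this
  obtain ⟨X, hX⟩ := Filter.eventually_atTop.1 (evt (θ ^ 3 / (64 * (k + 1) ^ 2 * 4 ^ N)) (8 * (k + 1) ^ 5)
    (2 ^ N) (by positivity) (by positivity) (by positivity))
  refine ⟨max ⌈X⌉₊ 3, le_max_right _ _, ?_⟩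
  intro V _ E σ L μ ℓ n hcard hlin hσ hδ hn hμ hb hsum hN'
  have hℓX : X ≤ ℓ := by
    have h1 := Nat.le_ceil X
    have h2 : ((⌈X⌉₊ : ℕ) : ℝ) ≤ ((max ⌈X⌉₊ 3 : ℕ) : ℝ) := by exact_mod_cast le_max_left _ _
    linarith
  have hℓ3 : 3 < ℓ := by
    have h2 : ((3 : ℕ) : ℝ) ≤ ((max ⌈X⌉₊ 3 : ℕ) : ℝ) := by exact_mod_cast le_max_right _ _
    push_cast at h2 hδ
    linarith
  have hℓ0 : 0 < ℓ := by linarith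
  rw [lt_div_iff₀ hn] at hb
  have hnℓ : n ≤ ℓ := by nlinarith
  have ha : n / ℓ ≤ 1 - ε / 2 := by
    rw [div_le_iff₀ hℓ0]
    have : (1 - ε / 2) * ((1 + ε) * n) ≤ (1 - ε / 2) * ℓ :=
      mul_le_mul_of_nonneg_left hb.le (by linarith)
    nlinarith [mul_pos hn hε]
  set I := {x // x ∈ E.sigma L} with hI
  have memE : ∀ x : I, x.1.1 ∈ E := fun x => (Finset.mem_sigma.1 x.2).1
  have memL : ∀ x : I, x.1.2 ∈ L x.1.1 := fun x => (Finset.mem_sigma.1 x.2).2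
  set R : I → I → Prop := fun x y => HIncident x.1.1 y.1.1 ∧ σ x.1.1 y.1.1 x.1.2 = y.1.2 with hR
  have hsymm : ∀ x y : I, R x y → R y x := by
    rintro x y ⟨h1, h2⟩
    refine ⟨⟨h1.1.symm, by rw [Finset.inter_comm]; exact h1.2⟩, ?_⟩
    rw [hσ _ (memE x) _ (memE y) h1, ← h2, Equiv.symm_apply_apply]
  have hsumI : ∀ F : Finset V → ℕ → ℝ, ∑ x : I, F x.1.1 x.1.2 = ∑ e ∈ E, ∑ c ∈ L e, F e c := by
    intro F
    rw [Finset.sum_coe_sort (E.sigma L) (fun x => F x.1 x.2), Finset.sum_sigma]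
  have hst : St k (fun x : I => x.1.1) R E (fun x => μ x.1.1 x.1.2 / ℓ) (n / ℓ) (1 / ℓ)
      (Real.exp (-(ℓ ^ ((1:ℝ) / 20))) / ℓ) := by
    refine ⟨hsymm, fun i j h => h.1.1, ?_, ?_, ?_, fun i => (hcard _ (memE i)).le, memE, by positivity, ?_, ?_, ?_, ?_⟩
    · intro i j h
      convert h.1.2
    · rintro i ⟨⟨e, c⟩, hj⟩ ⟨⟨e', c'⟩, hj'⟩ h1 h2 h3
      obtain rfl : e = e' := h3
      have : c = c' := h1.2.symm.trans h2.2
      subst this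
      rfl
    · intro i j h
      convert hlin _ (memE i) _ (memE j) h
    · intro i
      apply div_le_div_of_nonneg_right _ hℓ0.le
      refine le_trans (Real.exp_le_exp.2 (neg_le_neg ?_)) (hμ _ (memE i) _ (memL i)).1
      exact Real.rpow_le_rpow hn.le hnℓ (by norm_num)
    · intro i
      exact div_le_div_of_nonneg_right (hμ _ (memE i) _ (memL i)).2 hℓ0.le
    · intro e he
      have := hsumI (fun f c => if f = e then μ f c / ℓ else 0)
      calc _ = ∑ x : I, (fun f c => if f = e then μ f c / ℓ else 0) x.1.1 x.1.2 := by
            apply Finset.sum_congr rfl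
            intro x _
            by_cases hx : x.1.1 = e
            · rw [if_pos hx]; simp only [if_pos hx]
            · rw [if_neg hx]; simp only [if_neg hx]
        _ = ∑ f ∈ E, (if f = e then 1 else 0) := by
            rw [this]
            apply Finset.sum_congr rfl
            intro f hf
            by_cases hx : f = e
            · simp only [if_pos hx]
              rw [← Finset.sum_div, hsum f hf, div_self hℓ0.ne']
            · simp only [if_neg hx, Finset.sum_const_zero]
        _ = 1 := by simp [he]
    · intro i v hv
      have := hsumI (fun f c => if (v ∈ f ∧ f ≠ i.1.1) then (if σ f i.1.1 c = i.1.2 then μ f c / ℓ else 0) else 0)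
      calc _ ≤ ∑ x : I, (fun f c => if (v ∈ f ∧ f ≠ i.1.1) then (if σ f i.1.1 c = i.1.2 then μ f c / ℓ else 0) else 0) x.1.1 x.1.2 := by
            apply Finset.sum_le_sum
            intro x _
            have hx0 : 0 ≤ μ x.1.1 x.1.2 / ℓ :=
              div_nonneg ((Real.exp_pos _).le.trans (hμ _ (memE x) _ (memL x)).1) hℓ0.le
            by_cases hx : R i x ∧ v ∈ x.1.1
            · rw [if_pos hx]
              have hs := hsymm _ _ hx.1
              simp only [if_pos (show v ∈ x.1.1 ∧ x.1.1 ≠ i.1.1 from ⟨hx.2, hs.1.1⟩), if_pos hs.2]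
              exact le_rfl
            · rw [if_neg hx]
              exact ite_nn (ite_nn hx0)
        _ = NWeight E L μ σ i.1.1 v i.1.2 / ℓ := by
            rw [this]
            unfold NWeight
            rw [Finset.sum_filter, Finset.sum_div]
            apply Finset.sum_congr rfl
            intro f hf
            by_cases hx : v ∈ f ∧ f ≠ i.1.1
            · simp only [if_pos hx]
              rw [Finset.sum_filter, Finset.sum_div]
              apply Finset.sum_congr rfl
              intro c _
              split_ifs <;> simp
            · simp only [if_neg hx, Finset.sum_const_zero, zero_div]
        _ ≤ n / ℓ := div_le_div_of_nonneg_right (hN' _ (memE i) v hv _) hℓ0.le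
  have hτ1 : Real.exp (-(ℓ ^ ((1:ℝ) / 20))) / ℓ ≤ 1 := by
    rw [div_le_one hℓ0]
    have : Real.exp (-(ℓ ^ ((1:ℝ) / 20))) ≤ 1 := Real.exp_le_one_iff.2 (by
      have := Real.rpow_nonneg hℓ0.le ((1:ℝ) / 20); linarith)
    linarith
  obtain ⟨C, hC1, hC2⟩ := iterate hk hθ0 hθ1 hd0.le hd1 (by linarith) hdd N hst (by positivity) (by positivity)
    hτ1 ha (by linarith) (by
      have h1 := hX ℓ hℓX
      have e1 : θ ^ 3 / (64 * (k + 1) ^ 2 * (4 ^ N * (1 / ℓ))) = θ ^ 3 / (64 * (k + 1) ^ 2 * 4 ^ N) * ℓ := by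
        field_simp
      rw [e1]
      exact h1)
  have hch : ∀ e, ∃ c, e ∈ E → ∃ i ∈ C, i.1.1 = e ∧ i.1.2 = c := by
    intro e
    by_cases he : e ∈ E
    · obtain ⟨i, hi, hie⟩ := hC1 e he
      exact ⟨i.1.2, fun _ => ⟨i, hi, hie, rfl⟩⟩
    · exact ⟨0, fun h => absurd h he⟩
  choose γ hγ using hch
  refine ⟨γ, ?_, ?_⟩
  · intro e he
    obtain ⟨i, hi, h1, h2⟩ := hγ e he
    rw [← h1] at h2 ⊢
    rw [← h2]
    exact memL i
  · intro e he f hf hef hbad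
    obtain ⟨i, hi, h1, h2⟩ := hγ e he
    obtain ⟨j, hj, h3, h4⟩ := hγ f hf
    apply hC2 i hi j hj
    refine ⟨by rw [h1, h3]; exact hef, ?_⟩
    rw [h1, h3, h2, h4]
    exact hbad

end Final
end Nib

theorem stmt_6 :
    ∀ (ε : ℝ) (k : ℕ), 0 < ε → ε ≤ 1 / 4 →
    ∃ δ : ℕ, ∀ (V : Type) [Fintype V] [DecidableEq V]
      (E : Finset (Finset V)) (σ : Finset V → Finset V → ℕ ≃ ℕ)
      (L : Finset V → Finset ℕ) (μ : Finset V → ℕ → ℝ) (ℓ n : ℝ),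
      -- G is k-uniform
      (∀ e ∈ E, e.card = k) →
      -- G is linear
      (∀ e ∈ E, ∀ f ∈ E, e ≠ f → (e ∩ f).card ≤ 1) →
      IsEdgeCorrespondence E σ →
      -- (L, μ) is an assignment of weighted lists: weights lie in (0,1]
      (∀ e ∈ E, ∀ c ∈ L e, 0 < μ e c ∧ μ e c ≤ 1) →
      -- ℓ, n > δ
      (δ : ℝ) < ℓ → (δ : ℝ) < n →
      -- (a)
      (∀ e ∈ E, ∀ c ∈ L e, Real.exp (-(n ^ ((1 : ℝ) / 20))) ≤ μ e c ∧ μ e c ≤ 1) →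
      -- (b)
      1 + ε < ℓ / n → ℓ / n < 3 * Real.exp 1 * k →
      -- (c)
      (∀ e ∈ E, ∑ c ∈ L e, μ e c = ℓ) →
      -- (d)
      (∀ e ∈ E, ∀ v ∈ e, ∀ c : ℕ, NWeight E L μ σ e v c ≤ n) →
      -- conclusion: there is a partial (L,σ)-colouring, i.e. an (L,σ)-colouring γ of
      -- the subhypergraph with edge set E₀ ⊆ E, with the stated properties; here
      -- E \ E₀ is the set E' of uncoloured edges, and for e ∈ E' the truncated list
      -- L'(e) is (L e).filter (fun c => ∀ f ∈ E₀, HIncident f e → σ f e (γ f) ≠ c),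
      -- i.e. L(e) minus the colours blocked at e by colours of coloured incident edges.
      ∃ (E₀ : Finset (Finset V)) (γ : Finset V → ℕ),
        E₀ ⊆ E ∧ IsLσColouring E₀ L σ γ ∧
        ∃ (μ' : Finset V → ℕ → ℝ) (ℓ' n' : ℝ),
          0 < ℓ' ∧ 0 < n' ∧
          -- μ' maps L'(e) into (0,1]
          (∀ e ∈ E \ E₀,
            ∀ c ∈ (L e).filter (fun c => ∀ f ∈ E₀, HIncident f e → σ f e (γ f) ≠ c),
              0 < μ' e c ∧ μ' e c ≤ 1) ∧
          -- (a')
          (1 - 5 * k / Real.log n) * n ≤ n' ∧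
          -- (b')
          (1 + ε / (16 * Real.log n)) * (ℓ / n) ≤ ℓ' / n' ∧
          -- (c')
          (∀ e ∈ E \ E₀,
            ∑ c ∈ (L e).filter (fun c => ∀ f ∈ E₀, HIncident f e → σ f e (γ f) ≠ c),
              μ' e c = ℓ') ∧
          -- (d')
          (∀ e ∈ E \ E₀, ∀ v ∈ e,
            ∀ c ∈ (L e).filter (fun c => ∀ f ∈ E₀, HIncident f e → σ f e (γ f) ≠ c),
              NWeight (E \ E₀)
                (fun f => (L f).filter (fun c' => ∀ g ∈ E₀, HIncident g f → σ g f (γ g) ≠ c'))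
                μ' σ e v c ≤ n') ∧
          -- (e')
          (∀ e ∈ E \ E₀,
            ∀ c ∈ (L e).filter (fun c => ∀ f ∈ E₀, HIncident f e → σ f e (γ f) ≠ c),
              (1 - 2 / ℓ) * μ e c ≤ μ' e c ∧ μ' e c ≤ μ e c) := by
  intro ε k hε hε1
  rcases Nat.eq_zero_or_pos k with hk | hk
  · refine ⟨1, ?_⟩
    intro V _ _ E σ L μ ℓ n _ _ _ _ hℓ hn _ hb1 hb2 _ _
    exfalso
    subst hk
    simp only [Nat.cast_zero, mul_zero] at hb2
    linarith
  · obtain ⟨δ, hδ3, hδ⟩ := Nib.full_col ε k hε hε1 hk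
    refine ⟨δ, ?_⟩
    intro V _ _ E σ L μ ℓ n hcard hlin hσ hμ0 hℓ hn hμ hb1 hb2 hsum hN
    have h3 : (3:ℝ) ≤ δ := by exact_mod_cast hδ3
    have hn0 : 0 < n := by linarith
    have hℓ0 : 0 < ℓ := by linarith
    have hlog : 0 < Real.log n := Real.log_pos (by linarith)
    obtain ⟨γ, hγ⟩ := hδ V E σ L μ ℓ n hcard hlin hσ hℓ hn0 hμ hb1 hsum hN
    have hpos : 0 < 1 + ε / (16 * Real.log n) := by positivity
    refine ⟨E, γ, Finset.Subset.refl E, hγ, μ, (1 + ε / (16 * Real.log n)) * ℓ, n,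
      mul_pos hpos hℓ0, hn0, ?_, ?_, ?_, ?_, ?_, ?_⟩
    · intro e he
      simp at he
    · have : 0 ≤ 5 * (k:ℝ) / Real.log n := by positivity
      nlinarith
    · rw [mul_div_assoc]
    · intro e he
      simp at he
    · intro e he
      simp at he
    · intro e he
      simp at he
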